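/- arXiv:2207.01785 — 2 statements merged into one kernel-verified Lean document; each statement's English description precedes it below -/
import Mathlib

section
/- Let R be a commutative Noetherian ring, S a Serre subcategory of the category of R-modules, and 𝔟 ⊆ 𝔞 ideals of R. Let M be an R-module and let s ≥ 0 and t ≥ 0 be integers such that: (1) Ext^{s+t}_R(R/𝔞, M) belongs to S; (2) Ext^{s+1+i}_R(R/𝔞, H^{t−i}_𝔟(M)) belongs to S for all integers 1 ≤ i ≤ t; (3) Ext^{s−1−i}_R(R/𝔞, H^{t+i}_𝔟(M)) belongs to S for all integers 1 ≤ i ≤ s−1. Then the R-module Ext^{s}_R(R/𝔞, H^{t}_𝔟(M)) belongs to S. -/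
open CategoryTheory

universe u

/-- The `R`-module `Ext^i_R(N, M)` for two `R`-modules (objects of `ModuleCat R`). -/
noncomputable def extObj {R : Type u} [CommRing R] (N M : ModuleCat.{u} R) (i : ℕ) :
    ModuleCat.{u} R :=
  ((Ext R (ModuleCat.{u} R) i).obj (Opposite.op N)).obj M

/-- The `R`-module `Ext^i_R(R/𝔞, M)`. -/
noncomputable def extIdeal {R : Type u} [CommRing R] (𝔞 : Ideal R) (i : ℕ)
    (M : ModuleCat.{u} R) : ModuleCat.{u} R :=
  extObj (ModuleCat.of R (R ⧸ 𝔞)) M i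

/-- A Serre subcategory of the category of `R`-modules: a class of `R`-modules such that
for every short exact sequence `0 → L → M → N → 0`, `M` belongs to the class if and only if
both `L` and `N` belong to it. -/
structure SerreClass (R : Type u) [CommRing R] : Type (u + 1) where
  mem : ∀ (M : Type u) [AddCommGroup M] [Module R M], Prop
  mem_iff_of_ses :
    ∀ {L M N : Type u} [AddCommGroup L] [Module R L] [AddCommGroup M] [Module R M]
      [AddCommGroup N] [Module R N] (f : L →ₗ[R] M) (g : M →ₗ[R] N),
      Function.Injective f → Function.Surjective g → LinearMap.range f = LinearMap.ker g →
      (mem M ↔ (mem L ∧ mem N))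

section LeftDerivedSequence
universe v v' u'
open Limits

namespace CategoryTheory.NatTrans
variable {C : Type u} [Category.{v} C] [Abelian C]
  {D : Type u'} [Category.{v'} D] [Abelian D]
  {F G H : C ⥤ D} [F.Additive] [G.Additive] [H.Additive] (α : F ⟶ G) (β : G ⟶ H)

/-- The short complex of chain complexes `F(K) ⟶ G(K) ⟶ H(K)` attached to natural
transformations `α : F ⟶ G` and `β : G ⟶ H` with `α ≫ β = 0`. -/
noncomputable def mapComplexShortComplex (w : α ≫ β = 0) (K : ChainComplex C ℕ) :
    ShortComplex (ChainComplex D ℕ) where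
  X₁ := (F.mapHomologicalComplex _).obj K
  X₂ := (G.mapHomologicalComplex _).obj K
  X₃ := (H.mapHomologicalComplex _).obj K
  f := (NatTrans.mapHomologicalComplex α _).app K
  g := (NatTrans.mapHomologicalComplex β _).app K
  zero := by
    ext i
    exact congr_app w (K.X i)

/-- Functoriality of `mapComplexShortComplex` in the chain complex. -/
noncomputable def mapComplexShortComplexMap (w : α ≫ β = 0) {K L : ChainComplex C ℕ}
    (φ : K ⟶ L) :
    mapComplexShortComplex α β w K ⟶ mapComplexShortComplex α β w L where
  τ₁ := (F.mapHomologicalComplex _).map φ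
  τ₂ := (G.mapHomologicalComplex _).map φ
  τ₃ := (H.mapHomologicalComplex _).map φ
  comm₁₂ := ((NatTrans.mapHomologicalComplex α _).naturality φ)
  comm₂₃ := ((NatTrans.mapHomologicalComplex β _).naturality φ)

/-- The sequence of functors `0 ⟶ F ⟶ G ⟶ H ⟶ 0` is exact on projective objects. -/
def ShortExactOnProjectives (w : α ≫ β = 0) : Prop :=
  ∀ (P : C) [Projective P],
    (ShortComplex.mk (α.app P) (β.app P) (congr_app w P)).ShortExact

variable {α β} {w : α ≫ β = 0}

lemma ShortExactOnProjectives.shortExact (h : ShortExactOnProjectives α β w) {X : C}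
    (P : ProjectiveResolution X) :
    (mapComplexShortComplex α β w P.complex).ShortExact :=
  HomologicalComplex.shortExact_of_degreewise_shortExact _ fun i ↦ h (P.complex.X i)

section

variable [EnoughProjectives C]

variable (α β w)

/-- The left derived functors of `F` computed by the term of index `₁`
of `mapComplexShortComplex`. -/
noncomputable def leftDerivedIso₁ (n : ℕ) (X : C) : (F.leftDerived n).obj X ≅
    (mapComplexShortComplex α β w (projectiveResolution X).complex).X₁.homology n :=
  (projectiveResolution X).isoLeftDerivedObj F n

/-- The left derived functors of `G` computed by the term of index `₂`
of `mapComplexShortComplex`. -/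
noncomputable def leftDerivedIso₂ (n : ℕ) (X : C) : (G.leftDerived n).obj X ≅
    (mapComplexShortComplex α β w (projectiveResolution X).complex).X₂.homology n :=
  (projectiveResolution X).isoLeftDerivedObj G n

/-- The left derived functors of `H` computed by the term of index `₃`
of `mapComplexShortComplex`. -/
noncomputable def leftDerivedIso₃ (n : ℕ) (X : C) : (H.leftDerived n).obj X ≅
    (mapComplexShortComplex α β w (projectiveResolution X).complex).X₃.homology n :=
  (projectiveResolution X).isoLeftDerivedObj H n

lemma leftDerivedIso₁_hom_homologyMap (n : ℕ) (X : C) :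
    (leftDerivedIso₁ α β w n X).hom ≫ HomologicalComplex.homologyMap
      (mapComplexShortComplex α β w (projectiveResolution X).complex).f n =
    (NatTrans.leftDerived α n).app X ≫ (leftDerivedIso₂ α β w n X).hom := by
  rw [← Iso.comp_inv_eq, Category.assoc]
  exact (ProjectiveResolution.leftDerived_app_eq α (projectiveResolution X) n).symm

lemma leftDerivedIso₂_hom_homologyMap (n : ℕ) (X : C) :
    (leftDerivedIso₂ α β w n X).hom ≫ HomologicalComplex.homologyMap
      (mapComplexShortComplex α β w (projectiveResolution X).complex).g n =
    (NatTrans.leftDerived β n).app X ≫ (leftDerivedIso₃ α β w n X).hom := by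
  rw [← Iso.comp_inv_eq, Category.assoc]
  exact (ProjectiveResolution.leftDerived_app_eq β (projectiveResolution X) n).symm

lemma leftDerivedIso₁_inv_naturality (n : ℕ) {X Y : C} (f : X ⟶ Y) :
    (leftDerivedIso₁ α β w n X).inv ≫ (F.leftDerived n).map f =
      HomologicalComplex.homologyMap (mapComplexShortComplexMap α β w
        (ProjectiveResolution.lift f (projectiveResolution X) (projectiveResolution Y))).τ₁ n ≫
      (leftDerivedIso₁ α β w n Y).inv :=
  ProjectiveResolution.isoLeftDerivedObj_inv_naturality f _ _ _
    (ProjectiveResolution.lift_commutes_zero f _ _) F n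

lemma leftDerivedIso₃_hom_naturality (n : ℕ) {X Y : C} (f : X ⟶ Y) :
    (H.leftDerived n).map f ≫ (leftDerivedIso₃ α β w n Y).hom =
      (leftDerivedIso₃ α β w n X).hom ≫
      HomologicalComplex.homologyMap (mapComplexShortComplexMap α β w
        (ProjectiveResolution.lift f (projectiveResolution X) (projectiveResolution Y))).τ₃ n :=
  ProjectiveResolution.isoLeftDerivedObj_hom_naturality f _ _ _
    (ProjectiveResolution.lift_commutes_zero f _ _) H n

lemma down_rel_succ (n : ℕ) : (ComplexShape.down ℕ).Rel (n + 1) n := rfl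

variable {α β w} (h : ShortExactOnProjectives α β w) (n : ℕ)

/-- The connecting morphism in the long exact sequence of left derived functors attached to a
sequence of functors that is exact on projective objects. -/
noncomputable def ShortExactOnProjectives.leftDerivedδ :
    H.leftDerived (n + 1) ⟶ F.leftDerived n where
  app X := (leftDerivedIso₃ α β w (n + 1) X).hom ≫
    (h.shortExact (projectiveResolution X)).δ (n + 1) n (down_rel_succ n) ≫
      (leftDerivedIso₁ α β w n X).inv
  naturality X Y f := by
    have h3 := HomologicalComplex.HomologySequence.δ_naturality
      (mapComplexShortComplexMap α β w
        (ProjectiveResolution.lift f (projectiveResolution X) (projectiveResolution Y)))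
      (h.shortExact _) (h.shortExact _) (n + 1) n (down_rel_succ n)
    rw [Category.assoc, Category.assoc, leftDerivedIso₁_inv_naturality, reassoc_of% h3,
      ← Category.assoc, leftDerivedIso₃_hom_naturality, Category.assoc]

lemma ShortExactOnProjectives.leftDerived_comp_δ :
    NatTrans.leftDerived β (n + 1) ≫ h.leftDerivedδ n = 0 := by
  ext X
  have h1 := leftDerivedIso₂_hom_homologyMap α β w (n + 1) X
  have h2 := (h.shortExact (projectiveResolution X)).comp_δ (n + 1) n (down_rel_succ n)
  rw [comp_app, leftDerivedδ, ← Category.assoc, ← h1, Category.assoc, reassoc_of% h2]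
  simp

lemma ShortExactOnProjectives.leftDerived_δ_comp :
    h.leftDerivedδ n ≫ NatTrans.leftDerived α n = 0 := by
  ext X
  have h1 := leftDerivedIso₁_hom_homologyMap α β w n X
  have h2 := (h.shortExact (projectiveResolution X)).δ_comp (n + 1) n (down_rel_succ n)
  rw [← cancel_mono (leftDerivedIso₂ α β w n X).hom, comp_app, Category.assoc, ← h1, leftDerivedδ]
  simp only [Category.assoc, Iso.inv_hom_id_assoc, h2]
  simp

lemma leftDerived_comp_eq_zero (w : α ≫ β = 0) (n : ℕ) :
    NatTrans.leftDerived α n ≫ NatTrans.leftDerived β n = 0 := by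
  ext X
  have h1 := leftDerivedIso₁_hom_homologyMap α β w n X
  have h2 := leftDerivedIso₂_hom_homologyMap α β w n X
  rw [← cancel_mono (leftDerivedIso₃ α β w n X).hom, comp_app, Category.assoc, ← h2,
    ← Category.assoc, ← h1, Category.assoc, ← HomologicalComplex.homologyMap_comp,
    ShortComplex.zero]
  simp

lemma ShortExactOnProjectives.leftDerived_exact₁ (X : C) :
    (ShortComplex.mk _ _ (congr_app (h.leftDerived_δ_comp n) X)).Exact := by
  refine (ShortComplex.exact_iff_of_iso (ShortComplex.isoMk
    (leftDerivedIso₃ α β w (n + 1) X) (leftDerivedIso₁ α β w n X)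
    (leftDerivedIso₂ α β w n X) ?_ ?_)).2
    ((h.shortExact (projectiveResolution X)).homology_exact₁ (n + 1) n (down_rel_succ n))
  · simp [leftDerivedδ]
  · exact leftDerivedIso₁_hom_homologyMap α β w n X

lemma ShortExactOnProjectives.leftDerived_exact₂ (h : ShortExactOnProjectives α β w) (n : ℕ)
    (X : C) :
    (ShortComplex.mk _ _ (congr_app (leftDerived_comp_eq_zero w n) X)).Exact := by
  refine (ShortComplex.exact_iff_of_iso (ShortComplex.isoMk
    (leftDerivedIso₁ α β w n X) (leftDerivedIso₂ α β w n X)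
    (leftDerivedIso₃ α β w n X) ?_ ?_)).2
    ((h.shortExact (projectiveResolution X)).homology_exact₂ n)
  · exact leftDerivedIso₁_hom_homologyMap α β w n X
  · exact leftDerivedIso₂_hom_homologyMap α β w n X

lemma ShortExactOnProjectives.leftDerived_exact₃ (X : C) :
    (ShortComplex.mk _ _ (congr_app (h.leftDerived_comp_δ n) X)).Exact := by
  refine (ShortComplex.exact_iff_of_iso (ShortComplex.isoMk
    (leftDerivedIso₂ α β w (n + 1) X) (leftDerivedIso₃ α β w (n + 1) X)
    (leftDerivedIso₁ α β w n X) ?_ ?_)).2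
    ((h.shortExact (projectiveResolution X)).homology_exact₃ (n + 1) n (down_rel_succ n))
  · exact leftDerivedIso₂_hom_homologyMap α β w (n + 1) X
  · simp [leftDerivedδ]

lemma leftDerived_zero_comp_fromLeftDerivedZero (α : F ⟶ G) :
    NatTrans.leftDerived α 0 ≫ G.fromLeftDerivedZero = F.fromLeftDerivedZero ≫ α := by
  ext X
  let P := projectiveResolution X
  have h1 : HomologicalComplex.opcyclesMap ((mapHomologicalComplex α _).app P.complex) 0 ≫
      P.fromLeftDerivedZero' G = P.fromLeftDerivedZero' F ≫ α.app X := by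
    rw [← cancel_epi (HomologicalComplex.pOpcycles _ _),
      HomologicalComplex.p_opcyclesMap_assoc, P.pOpcycles_comp_fromLeftDerivedZero',
      ← Category.assoc, P.pOpcycles_comp_fromLeftDerivedZero']
    exact (α.naturality _).symm
  have h2 : HomologicalComplex.homologyMap ((mapHomologicalComplex α _).app P.complex) 0 ≫
      (ChainComplex.isoHomologyι₀ ((G.mapHomologicalComplex _).obj P.complex)).hom =
      (ChainComplex.isoHomologyι₀ ((F.mapHomologicalComplex _).obj P.complex)).hom ≫
      HomologicalComplex.opcyclesMap ((mapHomologicalComplex α _).app P.complex) 0 := by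
    simp
  have h3 : HomologicalComplex.homologyMap ((mapHomologicalComplex α _).app P.complex) 0 ≫
      (ChainComplex.isoHomologyι₀ ((G.mapHomologicalComplex _).obj P.complex)).hom ≫
        P.fromLeftDerivedZero' G =
      ((ChainComplex.isoHomologyι₀ ((F.mapHomologicalComplex _).obj P.complex)).hom ≫
        P.fromLeftDerivedZero' F) ≫ α.app X := by
    rw [reassoc_of% h2, h1, Category.assoc]
  rw [comp_app, comp_app, ProjectiveResolution.leftDerived_app_eq α P,
    P.fromLeftDerivedZero_eq, P.fromLeftDerivedZero_eq]
  simp only [Category.assoc, Iso.inv_hom_id_assoc]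
  exact congrArg ((P.isoLeftDerivedObj F 0).hom ≫ ·) h3

end
end CategoryTheory.NatTrans

end LeftDerivedSequence

section ExtLocalCohomology
open Limits

section ExtFunctor
open Opposite
variable {R : Type u} [CommRing R]

/-- The contravariant functor `Ext^n_R(-, Y)`. -/
noncomputable abbrev extFunctor (n : ℕ) (Y : ModuleCat.{u} R) :
    (ModuleCat.{u} R)ᵒᵖ ⥤ ModuleCat.{u} R :=
  (((linearYoneda R (ModuleCat.{u} R)).obj Y).rightOp.leftDerived n).leftOp

/-- The natural transformation `Ext^n_R(-, Y) ⟶ Ext^n_R(-, Z)` induced by `f : Y ⟶ Z`. -/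
noncomputable abbrev extFunctorMap (n : ℕ) {Y Z : ModuleCat.{u} R} (f : Y ⟶ Z) :
    extFunctor n Y ⟶ extFunctor n Z :=
  NatTrans.leftOp (NatTrans.leftDerived (((linearYoneda R (ModuleCat.{u} R)).map f).rightOp) n)

lemma linearYoneda_map_comp_map (T : ShortComplex (ModuleCat.{u} R)) :
    (linearYoneda R (ModuleCat.{u} R)).map T.f ≫
      (linearYoneda R (ModuleCat.{u} R)).map T.g = 0 := by
  ext X φ : 4
  exact (Category.assoc _ _ _).trans ((congrArg (φ ≫ ·) T.zero).trans comp_zero)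

lemma shortExactOnProjectives_linearYoneda {T : ShortComplex (ModuleCat.{u} R)}
    (hT : T.ShortExact) :
    NatTrans.ShortExactOnProjectives (((linearYoneda R (ModuleCat.{u} R)).map T.g).rightOp)
      (((linearYoneda R (ModuleCat.{u} R)).map T.f).rightOp)
      (congrArg NatTrans.rightOp (linearYoneda_map_comp_map T)) := by
  intro P hP
  have := hT.mono_f
  have := hT.epi_g
  have : (ShortComplex.mk _ _ (congr_app (linearYoneda_map_comp_map T) (op P))).ShortExact := by
    refine @ShortComplex.ShortExact.mk _ _ _ _ ?_ ?_ ?_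
    · rw [ShortComplex.moduleCat_exact_iff]
      intro (φ : P ⟶ T.X₂) (hφ : φ ≫ T.g = 0)
      exact ⟨hT.exact.lift φ hφ, hT.exact.lift_f φ hφ⟩
    · rw [ModuleCat.mono_iff_injective]
      intro (φ : P ⟶ T.X₁) (ψ : P ⟶ T.X₁) (hφψ : φ ≫ T.f = ψ ≫ T.f)
      exact (cancel_mono T.f).1 hφψ
    · rw [ModuleCat.epi_iff_surjective]
      intro (φ : P ⟶ T.X₃)
      exact ⟨Projective.factorThru φ T.g, Projective.factorThru_comp φ T.g⟩
  exact this.op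

variable {T : ShortComplex (ModuleCat.{u} R)} (hT : T.ShortExact) (n : ℕ)

/-- The connecting morphism `Ext^n_R(-, T.X₃) ⟶ Ext^(n+1)_R(-, T.X₁)`. -/
noncomputable def extFunctorδ :
    extFunctor n T.X₃ ⟶ extFunctor (n + 1) T.X₁ :=
  NatTrans.leftOp ((shortExactOnProjectives_linearYoneda hT).leftDerivedδ n)

/-- `Ext^n_R(-, T.X₃) ⟶ Ext^(n+1)_R(-, T.X₁) ⟶ Ext^(n+1)_R(-, T.X₂)`. -/
noncomputable def extShortComplex₁ : ShortComplex ((ModuleCat.{u} R)ᵒᵖ ⥤ ModuleCat.{u} R) :=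
  .mk (extFunctorδ hT n) (extFunctorMap (n + 1) T.f) (congrArg NatTrans.leftOp
    ((shortExactOnProjectives_linearYoneda hT).leftDerived_comp_δ n))

/-- `Ext^n_R(-, T.X₁) ⟶ Ext^n_R(-, T.X₂) ⟶ Ext^n_R(-, T.X₃)`. -/
noncomputable def extShortComplex₂ (T : ShortComplex (ModuleCat.{u} R)) (n : ℕ) :
    ShortComplex ((ModuleCat.{u} R)ᵒᵖ ⥤ ModuleCat.{u} R) :=
  .mk (extFunctorMap n T.f) (extFunctorMap n T.g) (congrArg NatTrans.leftOp
    (NatTrans.leftDerived_comp_eq_zero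
      (congrArg NatTrans.rightOp (linearYoneda_map_comp_map T)) n))

/-- `Ext^n_R(-, T.X₂) ⟶ Ext^n_R(-, T.X₃) ⟶ Ext^(n+1)_R(-, T.X₁)`. -/
noncomputable def extShortComplex₃ : ShortComplex ((ModuleCat.{u} R)ᵒᵖ ⥤ ModuleCat.{u} R) :=
  .mk (extFunctorMap n T.g) (extFunctorδ hT n) (congrArg NatTrans.leftOp
    ((shortExactOnProjectives_linearYoneda hT).leftDerived_δ_comp n))

lemma extShortComplex₁_exact (X) :
    ((extShortComplex₁ hT n).map ((evaluation _ _).obj X)).Exact :=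
  ((shortExactOnProjectives_linearYoneda hT).leftDerived_exact₃ n X.unop).unop

lemma extShortComplex₂_exact (hT : T.ShortExact) (n : ℕ) (X) :
    ((extShortComplex₂ T n).map ((evaluation _ _).obj X)).Exact :=
  ((shortExactOnProjectives_linearYoneda hT).leftDerived_exact₂ n X.unop).unop

lemma extShortComplex₃_exact (X) :
    ((extShortComplex₃ hT n).map ((evaluation _ _).obj X)).Exact :=
  ((shortExactOnProjectives_linearYoneda hT).leftDerived_exact₁ n X.unop).unop

lemma preservesFiniteLimits_linearYoneda_obj (Y : ModuleCat.{u} R) :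
    PreservesFiniteLimits ((linearYoneda R (ModuleCat.{u} R)).obj Y) := by
  have : PreservesFiniteLimits
      ((linearYoneda R (ModuleCat.{u} R)).obj Y ⋙ forget (ModuleCat.{u} R)) :=
    inferInstanceAs (PreservesFiniteLimits (yoneda.obj Y))
  exact preservesFiniteLimits_of_reflects_of_preserves _ (forget (ModuleCat.{u} R))

lemma isZero_extFunctor_succ_obj_of_injective (n : ℕ) (E : ModuleCat.{u} R) [Injective E]
    (X : (ModuleCat.{u} R)ᵒᵖ) : IsZero ((extFunctor (n + 1) E).obj X) := by
  refine IsZero.unop (IsZero.of_iso ?_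
    ((projectiveResolution X.unop).isoLeftDerivedObj
      ((linearYoneda R (ModuleCat.{u} R)).obj E).rightOp (n + 1)))
  let P := (projectiveResolution X.unop)
  have hP : P.complex.ExactAt (n + 1) := P.complex_exactAt_succ n
  refine (HomologicalComplex.exactAt_iff_isZero_homology _ _).1 ?_
  rw [HomologicalComplex.exactAt_iff' _ (n + 1 + 1) (n + 1) n (by simp) (by simp)] at hP ⊢
  have w : ((linearYoneda R (ModuleCat.{u} R)).obj E).map (P.complex.d (n + 1) n).op ≫
      ((linearYoneda R (ModuleCat.{u} R)).obj E).map (P.complex.d (n + 1 + 1) (n + 1)).op = 0 := by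
    rw [← Functor.map_comp, ← op_comp, P.complex.d_comp_d]
    exact Functor.map_zero _ _ _
  have : (ShortComplex.mk _ _ w).Exact := by
    rw [ShortComplex.moduleCat_exact_iff]
    intro (φ : P.complex.X (n + 1) ⟶ E) (hφ : P.complex.d (n + 1 + 1) (n + 1) ≫ φ = 0)
    exact ⟨hP.descToInjective φ hφ, hP.comp_descToInjective φ hφ⟩
  exact this.op

/-- `Ext^0_R(-, Y)` is `Hom_R(-, Y)`. -/
noncomputable def extFunctorZeroIso (Y : ModuleCat.{u} R) :
    extFunctor 0 Y ≅ (linearYoneda R (ModuleCat.{u} R)).obj Y :=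
  have := preservesFiniteLimits_linearYoneda_obj Y
  have := preservesFiniteColimits_rightOp ((linearYoneda R (ModuleCat.{u} R)).obj Y)
  { hom := NatTrans.leftOp
      ((linearYoneda R (ModuleCat.{u} R)).obj Y).rightOp.leftDerivedZeroIsoSelf.inv
    inv := NatTrans.leftOp
      ((linearYoneda R (ModuleCat.{u} R)).obj Y).rightOp.fromLeftDerivedZero
    hom_inv_id := congrArg NatTrans.leftOp
      ((linearYoneda R (ModuleCat.{u} R)).obj Y).rightOp.leftDerivedZeroIsoSelf.hom_inv_id
    inv_hom_id := congrArg NatTrans.leftOp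
      ((linearYoneda R (ModuleCat.{u} R)).obj Y).rightOp.leftDerivedZeroIsoSelf.inv_hom_id }

lemma extFunctorZeroIso_hom_naturality {Y Z : ModuleCat.{u} R} (f : Y ⟶ Z) :
    extFunctorMap 0 f ≫ (extFunctorZeroIso Z).hom =
      (extFunctorZeroIso Y).hom ≫ (linearYoneda R (ModuleCat.{u} R)).map f := by
  rw [← Iso.eq_comp_inv, Category.assoc, ← Iso.inv_comp_eq]
  exact congrArg NatTrans.leftOp (NatTrans.leftDerived_zero_comp_fromLeftDerivedZero
    (((linearYoneda R (ModuleCat.{u} R)).map f).rightOp))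

lemma isZero_extFunctor_zero_obj {X Y : ModuleCat.{u} R} (h : ∀ φ : X ⟶ Y, φ = 0) :
    IsZero ((extFunctor 0 Y).obj (op X)) := by
  refine IsZero.of_iso ?_ ((extFunctorZeroIso Y).app (op X))
  have : Subsingleton (((linearYoneda R (ModuleCat.{u} R)).obj Y).obj (op X)) :=
    ⟨fun φ ψ => (h φ).trans (h ψ).symm⟩
  exact ModuleCat.isZero_of_subsingleton _

lemma exact_of_evaluation {J : Type*} [Category* J] {A : Type*} [Category* A] [Abelian A]
    (T : ShortComplex (J ⥤ A))
    (hT : ∀ j, (T.map ((evaluation _ _).obj j)).Exact) : T.Exact := by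
  rw [ShortComplex.exact_iff_isZero_homology, Functor.isZero_iff]
  intro j
  exact IsZero.of_iso ((ShortComplex.exact_iff_isZero_homology _).1 (hT j))
    (T.mapHomologyIso ((evaluation _ _).obj j)).symm

end ExtFunctor

section PowTorsion
variable {R : Type u} [CommRing R]

/-- The submodule of elements of `M` killed by a power of the ideal `𝔟`. -/
def powTorsion (𝔟 : Ideal R) (M : Type*) [AddCommGroup M] [Module R M] : Submodule R M where
  carrier := {x | ∃ k : ℕ, ∀ r ∈ 𝔟 ^ k, r • x = 0}
  zero_mem' := ⟨0, fun r _ => smul_zero r⟩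
  add_mem' := by
    rintro x y ⟨k, hk⟩ ⟨l, hl⟩
    refine ⟨max k l, fun r hr => ?_⟩
    rw [smul_add, hk r (Ideal.pow_le_pow_right (le_max_left k l) hr),
      hl r (Ideal.pow_le_pow_right (le_max_right k l) hr), add_zero]
  smul_mem' := by
    rintro c x ⟨k, hk⟩
    exact ⟨k, fun r hr => by rw [smul_comm, hk r hr, smul_zero]⟩

section
variable {𝔟 : Ideal R} {M N : Type*} [AddCommGroup M] [Module R M] [AddCommGroup N] [Module R N]

lemma powTorsion_eq_top_iff : powTorsion 𝔟 M = ⊤ ↔ ∀ x : M, ∃ k : ℕ, ∀ r ∈ 𝔟 ^ k, r • x = 0 :=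
  Submodule.eq_top_iff'

lemma map_mem_powTorsion (f : M →ₗ[R] N) {x : M} (hx : x ∈ powTorsion 𝔟 M) :
    f x ∈ powTorsion 𝔟 N := by
  obtain ⟨k, hk⟩ := hx
  exact ⟨k, fun r hr => by rw [← map_smul, hk r hr, map_zero]⟩

lemma mem_powTorsion_of_injective (f : M →ₗ[R] N) (hf : Function.Injective f) {x : M}
    (hx : f x ∈ powTorsion 𝔟 N) : x ∈ powTorsion 𝔟 M := by
  obtain ⟨k, hk⟩ := hx
  exact ⟨k, fun r hr => hf (by rw [map_smul, hk r hr, map_zero])⟩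

lemma powTorsion_eq_top_of_surjective (f : M →ₗ[R] N) (hf : Function.Surjective f)
    (h : powTorsion 𝔟 M = ⊤) : powTorsion 𝔟 N = ⊤ := by
  refine Submodule.eq_top_iff'.2 fun y => ?_
  obtain ⟨x, rfl⟩ := hf y
  exact map_mem_powTorsion f (h ▸ Submodule.mem_top)

lemma linearMap_eq_zero_of_powTorsion (hM : powTorsion 𝔟 M = ⊤) (hN : powTorsion 𝔟 N = ⊥)
    (f : M →ₗ[R] N) : f = 0 :=
  LinearMap.ext fun _ => (Submodule.eq_bot_iff _).1 hN _
    (map_mem_powTorsion f (hM ▸ Submodule.mem_top))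

lemma powTorsion_powTorsion : powTorsion 𝔟 (powTorsion 𝔟 M) = ⊤ :=
  Submodule.eq_top_iff'.2 fun x =>
    mem_powTorsion_of_injective (powTorsion 𝔟 M).subtype (Submodule.subtype_injective _) x.2

lemma powTorsion_quotient_of_pow_le {I : Ideal R} (k : ℕ) (h : 𝔟 ^ k ≤ I) :
    powTorsion 𝔟 (R ⧸ I) = ⊤ := by
  refine powTorsion_eq_top_iff.2 fun x => ⟨k, fun r hr => ?_⟩
  obtain ⟨x, rfl⟩ := Submodule.Quotient.mk_surjective _ x
  rw [← Submodule.Quotient.mk_smul, Submodule.Quotient.mk_eq_zero]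
  exact I.mul_mem_right x (h hr)

lemma exists_pow_smul_eq_zero_of_fg {P : Submodule R M} (hP : P.FG) (h : P ≤ powTorsion 𝔟 M) :
    ∃ k : ℕ, ∀ r ∈ 𝔟 ^ k, ∀ x ∈ P, r • x = 0 := by
  obtain ⟨s, rfl⟩ := hP
  have h' : ∀ x : M, ∃ k : ℕ, x ∈ s → ∀ r ∈ 𝔟 ^ k, r • x = 0 := by
    intro x
    by_cases hx : x ∈ s
    · obtain ⟨k, hk⟩ := h (Submodule.subset_span hx)
      exact ⟨k, fun _ => hk⟩
    · exact ⟨0, fun hx' => absurd hx' hx⟩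
  choose k hk using h'
  refine ⟨s.sup k, fun r hr x hx => ?_⟩
  induction hx using Submodule.span_induction with
  | mem x hx => exact hk x hx r (Ideal.pow_le_pow_right (Finset.le_sup hx) hr)
  | zero => exact smul_zero r
  | add x y _ _ hx hy => rw [smul_add, hx, hy, add_zero]
  | smul c x _ hx => rw [smul_comm, hx, smul_zero]

end

variable [IsNoetherianRing R] (𝔟 : Ideal R)

lemma powTorsion_quotient_powTorsion (M : Type*) [AddCommGroup M] [Module R M] :
    powTorsion 𝔟 (M ⧸ powTorsion 𝔟 M) = ⊥ := by
  refine (Submodule.eq_bot_iff _).2 fun x hx => ?_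
  obtain ⟨x, rfl⟩ := Submodule.Quotient.mk_surjective _ x
  obtain ⟨k, hk⟩ := hx
  obtain ⟨l, hl⟩ := exists_pow_smul_eq_zero_of_fg (𝔟 := 𝔟)
    ((IsNoetherian.noetherian (𝔟 ^ k)).map (LinearMap.toSpanSingleton R M x)) (by
      rintro _ ⟨r, hr, rfl⟩
      have := hk r hr
      rwa [← Submodule.Quotient.mk_smul, Submodule.Quotient.mk_eq_zero] at this)
  rw [Submodule.Quotient.mk_eq_zero]
  refine ⟨l + k, fun r hr => ?_⟩
  rw [pow_add] at hr
  induction hr using Submodule.mul_induction_on' with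
  | mem_mul_mem a ha c hc =>
    rw [mul_smul]
    exact hl a ha _ ⟨c, hc, LinearMap.toSpanSingleton_apply R M x c⟩
  | add a _ c _ ha hc => rw [add_smul, ha, hc, add_zero]

lemma injective_powTorsion (E : Type u) [AddCommGroup E] [Module R E] [hE : Module.Injective R E] :
    Module.Injective R (powTorsion 𝔟 E) := by
  refine Module.Baer.injective fun I g => ?_
  let g₁ : I →ₗ[R] E := (powTorsion 𝔟 E).subtype ∘ₗ g
  obtain ⟨n, hn⟩ := exists_pow_smul_eq_zero_of_fg (𝔟 := 𝔟) (P := LinearMap.range g₁)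
    (by rw [LinearMap.range_eq_map]; exact (IsNoetherian.noetherian _).map _)
    (by rintro _ ⟨x, rfl⟩; exact (g x).2)
  obtain ⟨k, hk⟩ := 𝔟.exists_pow_inf_eq_pow_smul (I : Submodule R R)
  have hle : 𝔟 ^ (n + k) ⊓ I ≤ 𝔟 ^ n • I := by
    have := hk (n + k) (Nat.le_add_left k n)
    rw [Ideal.smul_top_eq_map, Algebra.algebraMap_self, Ideal.map_id, Nat.add_sub_cancel] at this
    exact this.le.trans (Submodule.smul_mono le_rfl inf_le_right)
  have hker : (𝔟 ^ n) • (⊤ : Submodule R I) ≤ LinearMap.ker g₁ :=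
    Submodule.smul_le.2 fun r hr y _ => by
      rw [LinearMap.mem_ker, map_smul]
      exact hn r hr _ ⟨y, rfl⟩
  let K : Ideal R := 𝔟 ^ (n + k)
  let J : Submodule R I := Submodule.comap I.subtype K
  have hJ : J ≤ LinearMap.ker g₁ := fun x hx =>
    hker ((Submodule.mem_smul_top_iff (𝔟 ^ n) I x).2 (hle ⟨hx, x.2⟩))
  have hinj : Function.Injective (Submodule.mapQ J K I.subtype le_rfl) := by
    rw [← LinearMap.ker_eq_bot, Submodule.ker_mapQ, Submodule.mkQ_map_self]
  obtain ⟨h, hh⟩ := hE.out _ hinj (J.liftQ g₁ hJ)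
  refine ⟨LinearMap.codRestrict (powTorsion 𝔟 E) (h ∘ₗ Submodule.mkQ _) fun r => ?_,
    fun x hx => ?_⟩
  · exact map_mem_powTorsion (M := R ⧸ K) h
      ((powTorsion_quotient_of_pow_le (𝔟 := 𝔟) (I := K) (n + k) le_rfl).symm ▸ Submodule.mem_top)
  · exact Subtype.ext (hh (Submodule.Quotient.mk ⟨x, hx⟩))

end PowTorsion

section TorsionSupported
open Opposite
variable {R : Type u} [CommRing R]

instance mono_extFunctorMap_zero {Y Z : ModuleCat.{u} R} (f : Y ⟶ Z) [Mono f] :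
    Mono (extFunctorMap 0 f) := by
  have : Mono ((linearYoneda R (ModuleCat.{u} R)).map f) := by
    have (X : (ModuleCat.{u} R)ᵒᵖ) : Mono (((linearYoneda R (ModuleCat.{u} R)).map f).app X) := by
      rw [ModuleCat.mono_iff_injective]
      intro (φ : X.unop ⟶ Y) (ψ : X.unop ⟶ Y) (hφψ : φ ≫ f = ψ ≫ f)
      exact (cancel_mono f).1 hφψ
    exact ⟨fun φ ψ hφψ => NatTrans.ext (funext fun X =>
      (cancel_mono (((linearYoneda R (ModuleCat.{u} R)).map f).app X)).1 (congr_app hφψ X))⟩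
  have : Mono (extFunctorZeroIso Y).hom := IsIso.mono_of_iso _
  have h := mono_comp (extFunctorZeroIso Y).hom ((linearYoneda R (ModuleCat.{u} R)).map f)
  rw [← extFunctorZeroIso_hom_naturality] at h
  exact mono_of_mono _ (extFunctorZeroIso Z).hom

lemma isZero_map_extFunctor_succ_of_injective
    (L : ((ModuleCat.{u} R)ᵒᵖ ⥤ ModuleCat.{u} R) ⥤ ModuleCat.{u} R)
    [L.PreservesZeroMorphisms] (n : ℕ) (E : ModuleCat.{u} R) [Injective E] :
    IsZero (L.obj (extFunctor (n + 1) E)) :=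
  L.map_isZero ((Functor.isZero_iff _).2 (isZero_extFunctor_succ_obj_of_injective n E))

/-- A functor out of the category of presheaves on `R`-modules is supported on `𝔟`-torsion modules
if it only depends on the values of presheaves on `𝔟`-torsion modules. -/
def TorsionSupported (L : ((ModuleCat.{u} R)ᵒᵖ ⥤ ModuleCat.{u} R) ⥤ ModuleCat.{u} R)
    (𝔟 : Ideal R) : Prop :=
  ∀ F : (ModuleCat.{u} R)ᵒᵖ ⥤ ModuleCat.{u} R,
    (∀ X : ModuleCat.{u} R, powTorsion 𝔟 X = ⊤ → IsZero (F.obj (op X))) → IsZero (L.obj F)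

lemma TorsionSupported.isZero_zero
    {L : ((ModuleCat.{u} R)ᵒᵖ ⥤ ModuleCat.{u} R) ⥤ ModuleCat.{u} R} {𝔟 : Ideal R}
    (hL : TorsionSupported L 𝔟) {M : ModuleCat.{u} R} (hM : powTorsion 𝔟 M = ⊥) :
    IsZero (L.obj (extFunctor 0 M)) :=
  hL _ fun _ hX => isZero_extFunctor_zero_obj fun φ =>
    ModuleCat.hom_ext (linearMap_eq_zero_of_powTorsion hX hM φ.hom)

lemma prop_map_extFunctor_of_iso {P : ObjectProperty (ModuleCat.{u} R)}
    [P.IsClosedUnderIsomorphisms] {L : ((ModuleCat.{u} R)ᵒᵖ ⥤ ModuleCat.{u} R) ⥤ ModuleCat.{u} R}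
    (n : ℕ) {M N : ModuleCat.{u} R} (e : Nonempty (M ≅ N))
    (h : P (L.obj (extFunctor n M))) : P (L.obj (extFunctor n N)) :=
  P.prop_of_iso (L.mapIso ((Ext R (ModuleCat.{u} R) n).flip.mapIso e.some)) h

variable (L : ((ModuleCat.{u} R)ᵒᵖ ⥤ ModuleCat.{u} R) ⥤ ModuleCat.{u} R)
  [PreservesFiniteLimits L] [PreservesFiniteColimits L] [L.PreservesZeroMorphisms]

section
variable {T : ShortComplex (ModuleCat.{u} R)} (hT : T.ShortExact) (n : ℕ)

lemma extShortComplex₁_map_exact : ((extShortComplex₁ hT n).map L).Exact :=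
  (exact_of_evaluation _ (extShortComplex₁_exact hT n)).map L

lemma extShortComplex₂_map_exact (hT : T.ShortExact) (n : ℕ) :
    ((extShortComplex₂ T n).map L).Exact :=
  (exact_of_evaluation _ (extShortComplex₂_exact hT n)).map L

lemma extShortComplex₃_map_exact : ((extShortComplex₃ hT n).map L).Exact :=
  (exact_of_evaluation _ (extShortComplex₃_exact hT n)).map L

lemma isIso_map_extFunctorδ (h₀ : IsZero (L.obj (extFunctor n T.X₂)))
    (h₁ : IsZero (L.obj (extFunctor (n + 1) T.X₂))) : IsIso (L.map (extFunctorδ hT n)) := by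
  have h₂ : Mono (L.map (extFunctorδ hT n)) :=
    (extShortComplex₃_map_exact L hT n).mono_g (h₀.eq_of_src _ _)
  have h₃ : Epi (L.map (extFunctorδ hT n)) :=
    (extShortComplex₁_map_exact L hT n).epi_f (h₁.eq_of_tgt _ _)
  exact isIso_of_mono_of_epi _

lemma isIso_map_extFunctorMap_g (hT : T.ShortExact) (n : ℕ)
    (h₀ : IsZero (L.obj (extFunctor n T.X₁)))
    (h₁ : IsZero (L.obj (extFunctor (n + 1) T.X₁))) :
    IsIso (L.map (extFunctorMap n T.g)) := by
  have h₂ : Mono (L.map (extFunctorMap n T.g)) :=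
    (extShortComplex₂_map_exact L hT n).mono_g (h₀.eq_of_src _ _)
  have h₃ : Epi (L.map (extFunctorMap n T.g)) :=
    (extShortComplex₃_map_exact L hT n).epi_f (h₁.eq_of_tgt _ _)
  exact isIso_of_mono_of_epi _

lemma isZero_map_extFunctor_X₃ (hT : T.ShortExact) (n : ℕ)
    (h₂ : IsZero (L.obj (extFunctor n T.X₂)))
    (h₁ : IsZero (L.obj (extFunctor (n + 1) T.X₁))) : IsZero (L.obj (extFunctor n T.X₃)) :=
  (extShortComplex₃_map_exact L hT n).isZero_of_both_zeros (h₂.eq_of_src _ _) (h₁.eq_of_tgt _ _)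

end

/-- The short exact sequence `0 ⟶ Γ_𝔟(M) ⟶ M ⟶ M/Γ_𝔟(M) ⟶ 0`. -/
abbrev powTorsionShortComplex (𝔟 : Ideal R) (M : ModuleCat.{u} R) :
    ShortComplex (ModuleCat.{u} R) where
  X₁ := .of R (powTorsion 𝔟 M)
  X₂ := M
  X₃ := .of R (M ⧸ powTorsion 𝔟 M)
  f := ModuleCat.ofHom (powTorsion 𝔟 M).subtype
  g := ModuleCat.ofHom (powTorsion 𝔟 M).mkQ
  zero := by
    ext x
    exact (Submodule.Quotient.mk_eq_zero _).2 x.2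

lemma powTorsionShortComplex_shortExact (𝔟 : Ideal R) (M : ModuleCat.{u} R) :
    (powTorsionShortComplex 𝔟 M).ShortExact where
  exact := by
    rw [ShortComplex.moduleCat_exact_iff]
    intro x hx
    exact ⟨⟨x, (Submodule.Quotient.mk_eq_zero _).1 hx⟩, rfl⟩
  mono_f := (ModuleCat.mono_iff_injective _).2 (Submodule.subtype_injective _)
  epi_g := (ModuleCat.epi_iff_surjective _).2 (Submodule.mkQ_surjective _)

/-- The short exact sequence `0 ⟶ M ⟶ N ⟶ N/M ⟶ 0` attached to a monomorphism `M ⟶ N`. -/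
noncomputable abbrev cokernelShortComplex {M N : ModuleCat.{u} R} (f : M ⟶ N) :
    ShortComplex (ModuleCat.{u} R) :=
  .mk f (cokernel.π f) (cokernel.condition f)

lemma cokernelShortComplex_shortExact {M N : ModuleCat.{u} R} (f : M ⟶ N) [Mono f] :
    (cokernelShortComplex f).ShortExact where
  exact := ShortComplex.exact_cokernel f

variable {L} {𝔟 : Ideal R}

lemma injective_of_powTorsion [IsNoetherianRing R] (𝔟 : Ideal R) (E : ModuleCat.{u} R)
    [Injective E] :
    Injective (ModuleCat.of R (powTorsion 𝔟 E)) := by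
  have : Module.Injective R E := (Module.injective_iff_injective_object R E).2 ‹_›
  have := injective_powTorsion 𝔟 E
  exact (Module.injective_iff_injective_object R _).1 this

lemma TorsionSupported.isZero_of_injective [IsNoetherianRing R] (hL : TorsionSupported L 𝔟) (n : ℕ)
    (E : ModuleCat.{u} R) [Injective E] :
    IsZero (L.obj (extFunctor n (ModuleCat.of R (E ⧸ powTorsion 𝔟 E)))) := by
  cases n with
  | zero => exact hL.isZero_zero (powTorsion_quotient_powTorsion 𝔟 E)
  | succ n =>
    have := injective_of_powTorsion 𝔟 E
    exact isZero_map_extFunctor_X₃ L (powTorsionShortComplex_shortExact 𝔟 E) (n + 1)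
      (isZero_map_extFunctor_succ_of_injective L n _)
      (isZero_map_extFunctor_succ_of_injective L (n + 1) _)

/-- A torsion-free module embeds in a quotient `E/Γ_𝔟(E)` with `E` injective. -/
lemma exists_mono_of_powTorsion_eq_bot (M : ModuleCat.{u} R) (hM : powTorsion 𝔟 M = ⊥) :
    ∃ (E : ModuleCat.{u} R) (_ : Injective E) (f : M ⟶ ModuleCat.of R (E ⧸ powTorsion 𝔟 E)),
      Mono f := by
  refine ⟨Injective.under M, inferInstance,
    Injective.ι M ≫ ModuleCat.ofHom (powTorsion 𝔟 (Injective.under M : ModuleCat.{u} R)).mkQ, ?_⟩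
  have hι : Function.Injective (Injective.ι M).hom :=
    (ModuleCat.mono_iff_injective _).1 inferInstance
  rw [ModuleCat.mono_iff_injective]
  refine (injective_iff_map_eq_zero
    ((powTorsion 𝔟 (Injective.under M : ModuleCat.{u} R)).mkQ ∘ₗ (Injective.ι M).hom)).2
    fun x hx => ?_
  exact (Submodule.eq_bot_iff _).1 hM x (mem_powTorsion_of_injective (Injective.ι M).hom hι
    ((Submodule.Quotient.mk_eq_zero _).1 hx))

/-- A torsion module embeds in an injective torsion module. -/
lemma exists_mono_of_powTorsion_eq_top [IsNoetherianRing R] (M : ModuleCat.{u} R)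
    (hM : powTorsion 𝔟 M = ⊤) :
    ∃ (J : ModuleCat.{u} R) (_ : Injective J) (_ : powTorsion 𝔟 J = ⊤) (f : M ⟶ J), Mono f := by
  have hι : Function.Injective (Injective.ι M).hom :=
    (ModuleCat.mono_iff_injective _).1 inferInstance
  refine ⟨ModuleCat.of R (powTorsion 𝔟 (Injective.under M : ModuleCat.{u} R)),
    injective_of_powTorsion 𝔟 _, powTorsion_powTorsion,
    ModuleCat.ofHom ((Injective.ι M).hom.codRestrict _ fun x =>
      map_mem_powTorsion _ (hM ▸ Submodule.mem_top)), ?_⟩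
  rw [ModuleCat.mono_iff_injective]
  exact fun x y hxy => hι (congrArg Subtype.val hxy)

/-- A torsion-free module `M` has a cosyzygy `N` shifting degrees by one. -/
lemma exists_shift_of_powTorsion_eq_bot [IsNoetherianRing R] (M : ModuleCat.{u} R)
    (hM : powTorsion 𝔟 M = ⊥) :
    ∃ N : ModuleCat.{u} R, ∀ (L : ((ModuleCat.{u} R)ᵒᵖ ⥤ ModuleCat.{u} R) ⥤ ModuleCat.{u} R)
      [PreservesFiniteLimits L] [PreservesFiniteColimits L] [L.PreservesZeroMorphisms],
      TorsionSupported L 𝔟 →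
      ∀ n, Nonempty (L.obj (extFunctor n N) ≅ L.obj (extFunctor (n + 1) M)) := by
  obtain ⟨E, _, f, _⟩ := exists_mono_of_powTorsion_eq_bot M hM
  refine ⟨cokernel f, fun L _ _ _ hL n => ?_⟩
  have := isIso_map_extFunctorδ L (cokernelShortComplex_shortExact f) n
    (hL.isZero_of_injective n E) (hL.isZero_of_injective (n + 1) E)
  exact ⟨asIso (L.map (extFunctorδ (cokernelShortComplex_shortExact f) n))⟩

lemma torsionSupported_evaluation (X : ModuleCat.{u} R) (hX : powTorsion 𝔟 X = ⊤) :
    TorsionSupported ((evaluation _ _).obj (op X)) 𝔟 := fun _ hF => hF X hX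

end TorsionSupported

section LocalCohomology
open Opposite
variable {R : Type u} [CommRing R] (𝔟 : Ideal R)

instance : HasExactColimitsOfShape ℕᵒᵖᵒᵖ (ModuleCat.{u} R) :=
  have : AB5OfSize.{0, 0} (ModuleCat.{u} R) := AB5OfSize_of_univLE.{0, 0, u, u} _
  inferInstance

/-- The diagram `k ↦ R/𝔟^k`. -/
noncomputable abbrev powQuotients : ℕᵒᵖᵒᵖ ⥤ (ModuleCat.{u} R)ᵒᵖ :=
  (localCohomology.ringModIdeals (localCohomology.idealPowersDiagram 𝔟)).op

/-- The functor sending a presheaf `F` on `R`-modules to the colimit of the modules `F(R/𝔟^k)`. -/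
noncomputable abbrev colimPowQuotients :
    ((ModuleCat.{u} R)ᵒᵖ ⥤ ModuleCat.{u} R) ⥤ ModuleCat.{u} R :=
  (Functor.whiskeringLeft _ _ _).obj (powQuotients 𝔟) ⋙ colim

instance : PreservesFiniteLimits (colimPowQuotients 𝔟) := comp_preservesFiniteLimits _ _

instance : PreservesFiniteColimits (colimPowQuotients 𝔟) := inferInstance

instance : (colimPowQuotients 𝔟).PreservesZeroMorphisms := inferInstance

/-- Local cohomology is the colimit of the modules `Ext^n_R(R/𝔟^k, M)`. -/
noncomputable def localCohomologyObjIso (n : ℕ) (M : ModuleCat.{u} R) :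
    (localCohomology 𝔟 n).obj M ≅ (colimPowQuotients 𝔟).obj (extFunctor n M) :=
  colimitObjIsoColimitCompEvaluation _ _

lemma powTorsion_powQuotients (k : ℕᵒᵖᵒᵖ) : powTorsion 𝔟 ((powQuotients 𝔟).obj k).unop = ⊤ :=
  powTorsion_quotient_of_pow_le (I := 𝔟 ^ k.unop.unop) k.unop.unop le_rfl

lemma torsionSupported_colimPowQuotients : TorsionSupported (colimPowQuotients 𝔟) 𝔟 := by
  intro F hF
  exact (colim (J := ℕᵒᵖᵒᵖ) (C := ModuleCat.{u} R)).map_isZero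
    ((Functor.isZero_iff _).2 fun k => hF _ (powTorsion_powQuotients 𝔟 k))

/-- Evaluation of homomorphisms out of `R/𝔟^k` at `1`. -/
noncomputable def evalOne (M : ModuleCat.{u} R) :
    powQuotients 𝔟 ⋙ (linearYoneda R (ModuleCat.{u} R)).obj M ⟶ (Functor.const _).obj M where
  app k := ModuleCat.ofHom
    { toFun := fun (φ : ModuleCat.of R (R ⧸ 𝔟 ^ k.unop.unop) ⟶ M) => φ.hom (Ideal.Quotient.mk _ 1)
      map_add' := fun _ _ => rfl
      map_smul' := fun _ _ => rfl }
  naturality k l f := by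
    ext (φ : ModuleCat.of R (R ⧸ 𝔟 ^ k.unop.unop) ⟶ M)
    rfl

/-- The natural map `H^0_𝔟(M) ⟶ M`. -/
noncomputable def fromColimPowQuotients (M : ModuleCat.{u} R) :
    (colimPowQuotients 𝔟).obj (extFunctor 0 M) ⟶ M :=
  colimit.desc _ ⟨M, Functor.whiskerLeft (powQuotients 𝔟) (extFunctorZeroIso M).hom ≫ evalOne 𝔟 M⟩

lemma ι_fromColimPowQuotients (M : ModuleCat.{u} R) (k : ℕᵒᵖᵒᵖ) :
    colimit.ι (powQuotients 𝔟 ⋙ extFunctor 0 M) k ≫ fromColimPowQuotients 𝔟 M =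
      (extFunctorZeroIso M).hom.app _ ≫ (evalOne 𝔟 M).app k :=
  colimit.ι_desc _ _

lemma fromColimPowQuotients_naturality {M N : ModuleCat.{u} R} (f : M ⟶ N) :
    (colimPowQuotients 𝔟).map (extFunctorMap 0 f) ≫ fromColimPowQuotients 𝔟 N =
      fromColimPowQuotients 𝔟 M ≫ f := by
  refine colimit.hom_ext (F := powQuotients 𝔟 ⋙ extFunctor 0 M) fun k => ?_
  have h := congr_app (extFunctorZeroIso_hom_naturality f) ((powQuotients 𝔟).obj k)
  have h₁ : colimit.ι (powQuotients 𝔟 ⋙ extFunctor 0 M) k ≫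
      (colimPowQuotients 𝔟).map (extFunctorMap 0 f) =
      (extFunctorMap 0 f).app _ ≫ colimit.ι (powQuotients 𝔟 ⋙ extFunctor 0 N) k :=
    colimit.ι_map _ _
  have h₂ : ((linearYoneda R (ModuleCat.{u} R)).map f).app ((powQuotients 𝔟).obj k) ≫
      (evalOne 𝔟 N).app k = (evalOne 𝔟 M).app k ≫ f := rfl
  rw [← Category.assoc, ← Category.assoc, h₁, ι_fromColimPowQuotients, Category.assoc,
    ι_fromColimPowQuotients, Category.assoc, ← h₂, ← Category.assoc, ← Category.assoc]
  exact congrArg (· ≫ (evalOne 𝔟 N).app k) h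

lemma evalOne_app_injective (M : ModuleCat.{u} R) (k : ℕᵒᵖᵒᵖ) :
    Function.Injective ((evalOne 𝔟 M).app k).hom := by
  intro (φ : ModuleCat.of R (R ⧸ 𝔟 ^ k.unop.unop) ⟶ M)
    (ψ : ModuleCat.of R (R ⧸ 𝔟 ^ k.unop.unop) ⟶ M)
    (h : φ.hom (Ideal.Quotient.mk _ 1) = ψ.hom (Ideal.Quotient.mk _ 1))
  refine ModuleCat.hom_ext (Submodule.linearMap_qext _ (LinearMap.ext_ring h))

lemma isIso_fromColimPowQuotients (M : ModuleCat.{u} R) (hM : powTorsion 𝔟 M = ⊤) :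
    IsIso (fromColimPowQuotients 𝔟 M) := by
  have : PreservesFilteredColimitsOfSize.{0, 0} (forget (ModuleCat.{u} R)) :=
    preservesFilteredColimitsOfSize_shrink.{0, u, 0, u} _
  have : Mono (fromColimPowQuotients 𝔟 M) := by
    rw [ModuleCat.mono_iff_injective]
    refine (injective_iff_map_eq_zero (fromColimPowQuotients 𝔟 M).hom).2 fun x hx => ?_
    obtain ⟨k, y, rfl⟩ := Concrete.colimit_exists_rep (powQuotients 𝔟 ⋙ extFunctor 0 M) x
    have h := ConcreteCategory.congr_hom (ι_fromColimPowQuotients 𝔟 M k) y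
    have h' : ((evalOne 𝔟 M).app k).hom (((extFunctorZeroIso M).hom.app _).hom y) = 0 :=
      h.symm.trans hx
    rw [← map_zero ((evalOne 𝔟 M).app k).hom] at h'
    have h₂ := evalOne_app_injective 𝔟 M k h'
    have h₃ : y = 0 := (ModuleCat.mono_iff_injective ((extFunctorZeroIso M).hom.app
      ((powQuotients 𝔟).obj k))).1 (IsIso.mono_of_iso _) (h₂.trans (map_zero _).symm)
    rw [h₃]
    exact map_zero (colimit.ι (powQuotients 𝔟 ⋙ extFunctor 0 M) k).hom
  have : Epi (fromColimPowQuotients 𝔟 M) := by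
    rw [ModuleCat.epi_iff_surjective]
    intro x
    obtain ⟨k, hk⟩ := powTorsion_eq_top_iff.1 hM x
    let φ : ModuleCat.of R (R ⧸ 𝔟 ^ k) ⟶ M := ModuleCat.ofHom
      (Submodule.liftQ (𝔟 ^ k) (LinearMap.toSpanSingleton R M x) hk)
    let z := ((extFunctorZeroIso M).inv.app ((powQuotients 𝔟).obj (op (op k)))).hom φ
    refine ⟨(colimit.ι (powQuotients 𝔟 ⋙ extFunctor 0 M) (op (op k))).hom z, ?_⟩
    have h := ConcreteCategory.congr_hom (ι_fromColimPowQuotients 𝔟 M (op (op k))) z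
    have h₁ : ((extFunctorZeroIso M).hom.app ((powQuotients 𝔟).obj (op (op k)))).hom z = φ :=
      ConcreteCategory.congr_hom ((extFunctorZeroIso M).inv_hom_id_app
        ((powQuotients 𝔟).obj (op (op k)))) φ
    refine h.trans ((congrArg ((evalOne 𝔟 M).app (op (op k))).hom h₁).trans ?_)
    exact one_smul R x
  exact isIso_of_mono_of_epi _

end LocalCohomology

section LocalCohomologyShift
open Opposite
variable {R : Type u} [CommRing R] [IsNoetherianRing R] (𝔟 : Ideal R)

lemma isZero_colimPowQuotients_succ_of_powTorsion_eq_top (n : ℕ) (T : ModuleCat.{u} R)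
    (hT : powTorsion 𝔟 T = ⊤) : IsZero ((colimPowQuotients 𝔟).obj (extFunctor (n + 1) T)) := by
  induction n generalizing T with
  | zero =>
    obtain ⟨J, hJ, hJT, f, hf⟩ := exists_mono_of_powTorsion_eq_top (𝔟 := 𝔟) T hT
    have hS := cokernelShortComplex_shortExact f
    have hQ := powTorsion_eq_top_of_surjective (cokernel.π f).hom
      ((ModuleCat.epi_iff_surjective _).1 inferInstance) hJT
    have hJiso := isIso_fromColimPowQuotients 𝔟 J hJT
    have hQiso := isIso_fromColimPowQuotients 𝔟 (cokernel f) hQ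
    have hepi : Epi ((colimPowQuotients 𝔟).map (extFunctorMap 0 (cokernel.π f))) := by
      have : Epi (fromColimPowQuotients 𝔟 J ≫ cokernel.π f) := epi_comp _ _
      rw [← fromColimPowQuotients_naturality] at this
      rw [← Category.comp_id ((colimPowQuotients 𝔟).map (extFunctorMap 0 (cokernel.π f))),
        ← IsIso.hom_inv_id (fromColimPowQuotients 𝔟 (cokernel f)), ← Category.assoc]
      exact epi_comp _ _
    have hδ : (colimPowQuotients 𝔟).map (extFunctorδ hS 0) = 0 := by
      refine (cancel_epi ((colimPowQuotients 𝔟).map (extFunctorMap 0 (cokernel.π f)))).1 ?_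
      rw [comp_zero]
      exact ((extShortComplex₃ hS 0).map (colimPowQuotients 𝔟)).zero
    exact (extShortComplex₁_map_exact (colimPowQuotients 𝔟) hS 0).isZero_of_both_zeros hδ
      ((isZero_map_extFunctor_succ_of_injective (colimPowQuotients 𝔟) 0 J).eq_of_tgt _ _)
  | succ n ih =>
    obtain ⟨J, hJ, hJT, f, hf⟩ := exists_mono_of_powTorsion_eq_top (𝔟 := 𝔟) T hT
    have hS := cokernelShortComplex_shortExact f
    have hQ := powTorsion_eq_top_of_surjective (cokernel.π f).hom
      ((ModuleCat.epi_iff_surjective _).1 inferInstance) hJT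
    exact (extShortComplex₁_map_exact (colimPowQuotients 𝔟) hS (n + 1)).isZero_of_both_zeros
      ((ih _ hQ).eq_of_src _ _)
      ((isZero_map_extFunctor_succ_of_injective (colimPowQuotients 𝔟) (n + 1) J).eq_of_tgt _ _)

/-- The `n`-th local cohomology module, as a colimit of `Ext`-modules. -/
noncomputable abbrev colimExt (n : ℕ) (M : ModuleCat.{u} R) : ModuleCat.{u} R :=
  (colimPowQuotients 𝔟).obj (extFunctor n M)

lemma nonempty_colimExt_zero_iso (M : ModuleCat.{u} R) :
    Nonempty (colimExt 𝔟 0 M ≅ ModuleCat.of R (powTorsion 𝔟 M)) := by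
  have hS := powTorsionShortComplex_shortExact 𝔟 M
  have h₁ : IsIso ((colimPowQuotients 𝔟).map (extFunctorMap 0 (powTorsionShortComplex 𝔟 M).f)) := by
    have := hS.mono_f
    have : Epi ((colimPowQuotients 𝔟).map (extFunctorMap 0 (powTorsionShortComplex 𝔟 M).f)) :=
      (extShortComplex₂_map_exact (colimPowQuotients 𝔟) hS 0).epi_f
        (((torsionSupported_colimPowQuotients 𝔟).isZero_zero
          (powTorsion_quotient_powTorsion 𝔟 M)).eq_of_tgt _ _)
    exact isIso_of_mono_of_epi _
  have := isIso_fromColimPowQuotients 𝔟 (ModuleCat.of R (powTorsion 𝔟 M)) powTorsion_powTorsion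
  exact ⟨(asIso ((colimPowQuotients 𝔟).map
    (extFunctorMap 0 (powTorsionShortComplex 𝔟 M).f))).symm ≪≫
      asIso (fromColimPowQuotients 𝔟 (ModuleCat.of R (powTorsion 𝔟 M)))⟩

lemma nonempty_colimExt_succ_iso (n : ℕ) (M : ModuleCat.{u} R) :
    Nonempty (colimExt 𝔟 (n + 1) M ≅
      colimExt 𝔟 (n + 1) (ModuleCat.of R (M ⧸ powTorsion 𝔟 M))) := by
  have hS := powTorsionShortComplex_shortExact 𝔟 M
  have := isIso_map_extFunctorMap_g (colimPowQuotients 𝔟) hS (n + 1)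
    (isZero_colimPowQuotients_succ_of_powTorsion_eq_top 𝔟 n _ powTorsion_powTorsion)
    (isZero_colimPowQuotients_succ_of_powTorsion_eq_top 𝔟 (n + 1) _ powTorsion_powTorsion)
  exact ⟨asIso ((colimPowQuotients 𝔟).map
    (extFunctorMap (n + 1) (powTorsionShortComplex 𝔟 M).g))⟩

end LocalCohomologyShift

section SerreClass
open Opposite
variable {R : Type u} [CommRing R] [IsNoetherianRing R] (𝔟 : Ideal R)

lemma exists_colimExt_shift (M : ModuleCat.{u} R) :
    ∃ N : ModuleCat.{u} R, (∀ n, Nonempty (colimExt 𝔟 n N ≅ colimExt 𝔟 (n + 1) M)) ∧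
      ∀ (L : ((ModuleCat.{u} R)ᵒᵖ ⥤ ModuleCat.{u} R) ⥤ ModuleCat.{u} R)
        [PreservesFiniteLimits L] [PreservesFiniteColimits L] [L.PreservesZeroMorphisms],
        TorsionSupported L 𝔟 → ∀ n, Nonempty (L.obj (extFunctor n N) ≅
          L.obj (extFunctor (n + 1) (ModuleCat.of R (M ⧸ powTorsion 𝔟 M)))) := by
  obtain ⟨N, hN⟩ := exists_shift_of_powTorsion_eq_bot
    (ModuleCat.of R (M ⧸ powTorsion 𝔟 M)) (powTorsion_quotient_powTorsion 𝔟 M)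
  refine ⟨N, fun n => ?_, fun L _ _ _ hL => hN L hL⟩
  obtain ⟨e⟩ := hN (colimPowQuotients 𝔟) (torsionSupported_colimPowQuotients 𝔟) n
  obtain ⟨e'⟩ := nonempty_colimExt_succ_iso 𝔟 n M
  exact ⟨e ≪≫ e'.symm⟩

variable {𝔟} {P : ObjectProperty (ModuleCat.{u} R)} [P.IsSerreClass]
  {L : ((ModuleCat.{u} R)ᵒᵖ ⥤ ModuleCat.{u} R) ⥤ ModuleCat.{u} R}
  [PreservesFiniteLimits L] [PreservesFiniteColimits L] [L.PreservesZeroMorphisms]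

lemma TorsionSupported.prop_of_forall_colimExt (hL : TorsionSupported L 𝔟) (n : ℕ)
    (M : ModuleCat.{u} R)
    (h : ∀ j ≤ n, P (L.obj (extFunctor (n - j) (colimExt 𝔟 j M)))) :
    P (L.obj (extFunctor n M)) := by
  induction n generalizing M with
  | zero =>
    refine P.prop_X₂_of_exact
      (extShortComplex₂_map_exact L (powTorsionShortComplex_shortExact 𝔟 M) 0)
      (prop_map_extFunctor_of_iso 0 (nonempty_colimExt_zero_iso 𝔟 M) (h 0 le_rfl)) ?_
    exact P.prop_of_isZero (hL.isZero_zero (powTorsion_quotient_powTorsion 𝔟 M))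
  | succ n ih =>
    obtain ⟨N, hN, hN'⟩ := exists_colimExt_shift 𝔟 M
    refine P.prop_X₂_of_exact
      (extShortComplex₂_map_exact L (powTorsionShortComplex_shortExact 𝔟 M) (n + 1))
      (prop_map_extFunctor_of_iso (n + 1) (nonempty_colimExt_zero_iso 𝔟 M) (h 0 n.succ.zero_le))
      (P.prop_of_iso (hN' L hL n).some (ih N fun j hj => ?_))
    have := h (j + 1) (Nat.succ_le_succ hj)
    rw [Nat.add_sub_add_right] at this
    exact prop_map_extFunctor_of_iso (n - j) ((hN j).map Iso.symm) this

lemma TorsionSupported.prop_colimExt (hL : TorsionSupported L 𝔟) (M : ModuleCat.{u} R) (s t : ℕ)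
    (h1 : P (L.obj (extFunctor (s + t) M)))
    (h2 : ∀ i : ℕ, 1 ≤ i → i ≤ t →
      P (L.obj (extFunctor (s + 1 + i) (colimExt 𝔟 (t - i) M))))
    (h3 : ∀ i : ℕ, 1 ≤ i → i ≤ s - 1 →
      P (L.obj (extFunctor (s - 1 - i) (colimExt 𝔟 (t + i) M)))) :
    P (L.obj (extFunctor s (colimExt 𝔟 t M))) := by
  induction t generalizing M with
  | zero =>
    have hS := powTorsionShortComplex_shortExact 𝔟 M
    refine prop_map_extFunctor_of_iso s ((nonempty_colimExt_zero_iso 𝔟 M).map Iso.symm) ?_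
    match s with
    | 0 =>
      have := hS.mono_f
      exact P.prop_of_mono (L.map (extFunctorMap 0 (powTorsionShortComplex 𝔟 M).f)) h1
    | 1 =>
      exact P.prop_X₂_of_exact (extShortComplex₁_map_exact L hS 0)
        (P.prop_of_isZero (hL.isZero_zero (powTorsion_quotient_powTorsion 𝔟 M))) h1
    | k + 2 =>
      obtain ⟨N, hN, hN'⟩ := exists_colimExt_shift 𝔟 M
      refine P.prop_X₂_of_exact (extShortComplex₁_map_exact L hS (k + 1))
        (P.prop_of_iso (hN' L hL k).some (hL.prop_of_forall_colimExt k N fun j hj => ?_)) h1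
      refine prop_map_extFunctor_of_iso (k - j) ((hN j).map Iso.symm) ?_
      have := h3 (j + 1) (by lia) (by lia)
      rwa [show k + 2 - 1 - (j + 1) = k - j by lia, Nat.zero_add] at this
  | succ t ih =>
    obtain ⟨N, hN, hN'⟩ := exists_colimExt_shift 𝔟 M
    refine prop_map_extFunctor_of_iso s (hN t) (ih N ?_ (fun i hi hit => ?_) fun i hi his => ?_)
    · refine P.prop_of_iso (hN' L hL (s + t)).some.symm (P.prop_X₂_of_exact
        (extShortComplex₃_map_exact L (powTorsionShortComplex_shortExact 𝔟 M) (s + t + 1)) h1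
        (prop_map_extFunctor_of_iso _ (nonempty_colimExt_zero_iso 𝔟 M) ?_))
      have := h2 (t + 1) (by lia) le_rfl
      rwa [Nat.sub_self, show s + 1 + (t + 1) = s + t + 1 + 1 by lia] at this
    · refine prop_map_extFunctor_of_iso _ ((hN (t - i)).map Iso.symm) ?_
      have := h2 i hi (by lia)
      rwa [show t + 1 - i = t - i + 1 by lia] at this
    · refine prop_map_extFunctor_of_iso _ ((hN (t + i)).map Iso.symm) ?_
      have := h3 i hi his
      rwa [show t + 1 + i = t + i + 1 by lia] at this

end SerreClass

section
variable {R : Type u} [CommRing R]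

/-- A Serre class as a property of objects of the category of `R`-modules. -/
def SerreClass.objectProperty (S : SerreClass R) : ObjectProperty (ModuleCat.{u} R) :=
  fun M => S.mem M

lemma SerreClass.mem_iff_of_shortExact (S : SerreClass R) {T : ShortComplex (ModuleCat.{u} R)}
    (hT : T.ShortExact) : S.mem T.X₂ ↔ S.mem T.X₁ ∧ S.mem T.X₃ :=
  S.mem_iff_of_ses T.f.hom T.g.hom hT.moduleCat_injective_f hT.moduleCat_surjective_g
    hT.exact.moduleCat_range_eq_ker

lemma SerreClass.isSerreClass_objectProperty (S : SerreClass R) (M : ModuleCat.{u} R)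
    (hM : S.mem M) : S.objectProperty.IsSerreClass where
  exists_zero := ⟨.of R PUnit, ModuleCat.isZero_of_subsingleton _,
    ((S.mem_iff_of_ses (0 : PUnit.{u + 1} →ₗ[R] M) LinearMap.id
      (Function.injective_of_subsingleton _) Function.surjective_id
      (by rw [LinearMap.range_zero, LinearMap.ker_id])).1 hM).1⟩
  prop_of_mono f _ hY :=
    ((S.mem_iff_of_shortExact (cokernelShortComplex_shortExact f)).1 hY).1
  prop_of_epi f _ hX :=
    ((S.mem_iff_of_shortExact (T := .mk (kernel.ι f) f (kernel.condition f))
      { exact := ShortComplex.exact_kernel f }).1 hX).2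
  prop_X₂_of_shortExact hT h₁ h₃ := (S.mem_iff_of_shortExact hT).2 ⟨h₁, h₃⟩

end

end ExtLocalCohomology

/-- Yang–Shen, Lemma 1.3 (module case, `sup X = 0`): if `𝔟 ⊆ 𝔞` are ideals of a commutative
noetherian ring `R`, `S` is a Serre subcategory of the category of `R`-modules, `M` an
`R`-module and `s, t ≥ 0` integers such that
(1) `Ext^{s+t}_R(R/𝔞, M) ∈ S`;
(2) `Ext^{s+1+i}_R(R/𝔞, H^{t-i}_𝔟(M)) ∈ S` for all `1 ≤ i ≤ t`;
(3) `Ext^{s-1-i}_R(R/𝔞, H^{t+i}_𝔟(M)) ∈ S` for all `1 ≤ i ≤ s-1`;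
then `Ext^s_R(R/𝔞, H^t_𝔟(M)) ∈ S`. -/
theorem serreClass_mem_ext_localCohomology
    {R : Type u} [CommRing R] [IsNoetherianRing R] (S : SerreClass R)
    (𝔞 𝔟 : Ideal R) (h𝔟𝔞 : 𝔟 ≤ 𝔞) (M : ModuleCat.{u} R) (s t : ℕ)
    (h1 : S.mem (extIdeal 𝔞 (s + t) M))
    (h2 : ∀ i : ℕ, 1 ≤ i → i ≤ t →
      S.mem (extIdeal 𝔞 (s + 1 + i) ((localCohomology 𝔟 (t - i)).obj M)))
    (h3 : ∀ i : ℕ, 1 ≤ i → i ≤ s - 1 →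
      S.mem (extIdeal 𝔞 (s - 1 - i) ((localCohomology 𝔟 (t + i)).obj M))) :
    S.mem (extIdeal 𝔞 s ((localCohomology 𝔟 t).obj M)) := by
  have := S.isSerreClass_objectProperty _ h1
  have hX : powTorsion 𝔟 (ModuleCat.of R (R ⧸ 𝔞)) = ⊤ :=
    powTorsion_quotient_of_pow_le (I := 𝔞) 1 ((pow_one 𝔟).trans_le h𝔟𝔞)
  have hL := torsionSupported_evaluation _ hX
  have e (n : ℕ) : Nonempty ((localCohomology 𝔟 n).obj M ≅ colimExt 𝔟 n M) :=
    ⟨localCohomologyObjIso 𝔟 n M⟩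
  exact prop_map_extFunctor_of_iso (P := S.objectProperty)
    (L := (evaluation _ _).obj (Opposite.op (ModuleCat.of R (R ⧸ 𝔞)))) s ((e t).map Iso.symm)
    (hL.prop_colimExt M s t h1
      (fun i hi hit => prop_map_extFunctor_of_iso _ (e _) (h2 i hi hit))
      (fun i hi his => prop_map_extFunctor_of_iso _ (e _) (h3 i hi his)))
end

section
/- Let R be a commutative Noetherian ring, S a Serre subcategory of the category of R-modules, 𝔟 ⊆ 𝔞 ideals of R, M an R-module, and t ≥ 0 an integer. If Ext^{s}_R(R/𝔞, M) belongs to S for every s ≥ 0 and Ext^{s}_R(R/𝔞, H^{j}_𝔟(M)) belongs to S for every s ≥ 0 and every j ≥ 0 with j ≠ t, then Ext^{s}_R(R/𝔞, H^{t}_𝔟(M)) belongs to S for every s ≥ 0. -/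
open CategoryTheory

universe u

namespace CategoryTheory.ProjectiveResolution

open Abelian

variable {R : Type u} [CommRing R] {X X' Y : ModuleCat.{u} R}

lemma extMk_zero_eq_zero_iff (P : ProjectiveResolution X) (f : P.complex.X 0 ⟶ Y)
    (hf : P.complex.d 1 0 ≫ f = 0) : P.extMk f 1 rfl hf = 0 ↔ f = 0 := by
  refine ⟨fun h ↦ ?_, fun h ↦ by subst h; simp⟩
  simp only [← P.extEquivCohomologyClass.apply_eq_iff_eq,
    extEquivCohomologyClass_extMk, extEquivCohomologyClass_zero,
    CochainComplex.HomComplex.CohomologyClass.mk_eq_zero_iff] at h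
  rw [CochainComplex.HomComplex.Cocycle.toSingleMk_mem_coboundaries_iff _ _ _ _ _ 1 (by simp)] at h
  obtain ⟨g, hg⟩ := h
  have : P.cochainComplex.d (-(0:ℕ)) 1 = 0 := by
    apply Limits.IsZero.eq_of_tgt
    exact CochainComplex.isZero_of_isStrictlyLE _ 0 1
  rw [this, Limits.zero_comp] at hg
  simpa using hg.symm

lemma smul_extMk (P : ProjectiveResolution X) {n : ℕ} (r : R) (f : P.complex.X n ⟶ Y)
    (hf : P.complex.d (n + 1) n ≫ f = 0) :
    r • P.extMk f (n + 1) rfl hf = P.extMk (r • f) (n + 1) rfl (by simp [hf]) := by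
  rw [Ext.smul_eq_comp_mk₀, extMk_comp_mk₀]
  congr 1

variable (P : ProjectiveResolution X) (P' : ProjectiveResolution X')

/-- The inclusion of the cocycles of the complex of morphisms from a projective resolution of `X`
to `Y`. -/
noncomputable def cocycleHom (Y : ModuleCat.{u} R) (n : ℕ) :
    (P.complex.linearYonedaObj R Y).cycles n →ₗ[R] (P.complex.X n ⟶ Y) :=
  ((P.complex.linearYonedaObj R Y).iCycles n).hom

lemma cocycleHom_injective (n : ℕ) : Function.Injective (P.cocycleHom Y n) :=
  (ModuleCat.mono_iff_injective ((P.complex.linearYonedaObj R Y).iCycles n)).mp inferInstance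

lemma d_comp_cocycleHom (n : ℕ) (x : (P.complex.linearYonedaObj R Y).cycles n) :
    P.complex.d (n + 1) n ≫ P.cocycleHom Y n x = 0 :=
  ConcreteCategory.congr_hom ((P.complex.linearYonedaObj R Y).iCycles_d n (n + 1)) x

lemma cocycleHom_toCycles (p n : ℕ) (g : P.complex.X p ⟶ Y) :
    P.cocycleHom Y n ((P.complex.linearYonedaObj R Y).toCycles p n g) = P.complex.d n p ≫ g :=
  ConcreteCategory.congr_hom ((P.complex.linearYonedaObj R Y).toCycles_i p n) g

lemma exists_cocycleHom_eq (n : ℕ) (f : P.complex.X n ⟶ Y) (hf : P.complex.d (n + 1) n ≫ f = 0) :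
    ∃ x, P.cocycleHom Y n x = f := by
  let K := P.complex.linearYonedaObj R Y
  let k : ModuleCat.of R R ⟶ K.X n :=
    ModuleCat.ofHom (LinearMap.toSpanSingleton R (P.complex.X n ⟶ Y) f)
  have hk : k ≫ K.d n (n + 1) = 0 := by
    ext
    change P.complex.d (n + 1) n ≫ ((1 : R) • f) = 0
    rw [one_smul, hf]
  exact ⟨K.liftCycles k (n + 1) (by simp) hk (1 : R),
    (ConcreteCategory.congr_hom (K.liftCycles_i k (n + 1) (by simp) hk) (1 : R)).trans
      (one_smul R f)⟩

/-- The class in `Ext X Y n` of a cocycle of the complex of morphisms from a projective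
resolution of `X` to `Y`. -/
noncomputable def cyclesToExt (Y : ModuleCat.{u} R) (n : ℕ) :
    (P.complex.linearYonedaObj R Y).cycles n ⟶ ModuleCat.of R (Abelian.Ext X Y n) :=
  ModuleCat.ofHom
    { toFun x := P.extMk (P.cocycleHom Y n x) (n + 1) rfl (P.d_comp_cocycleHom n x)
      map_add' x y := by
        rw [add_extMk]
        congr 1
        exact map_add (P.cocycleHom Y n) x y
      map_smul' r x := by
        rw [RingHom.id_apply, smul_extMk]
        congr 1
        exact map_smul (P.cocycleHom Y n) r x }

lemma cyclesToExt_apply (n : ℕ) (x : (P.complex.linearYonedaObj R Y).cycles n) :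
    P.cyclesToExt Y n x =
      P.extMk (P.cocycleHom Y n x) (n + 1) rfl (P.d_comp_cocycleHom n x) := rfl

lemma toCycles_cyclesToExt (n : ℕ) :
    (P.complex.linearYonedaObj R Y).toCycles ((ComplexShape.up ℕ).prev n) n ≫
      P.cyclesToExt Y n = 0 := by
  cases n with
  | zero =>
    rw [HomologicalComplex.toCycles_eq_zero _ (by simp), Limits.zero_comp]
  | succ p =>
    rw [show (ComplexShape.up ℕ).prev (p + 1) = p by simp]
    ext g
    exact (P.extMk_eq_zero_iff _ (p + 2) rfl (P.d_comp_cocycleHom _ _) p rfl).mpr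
      ⟨g, (P.cocycleHom_toCycles p (p + 1) g).symm⟩

/-- The comparison from the cohomology of the complex of morphisms out of a projective
resolution to `Ext`. -/
noncomputable def homologyToExt (Y : ModuleCat.{u} R) (n : ℕ) :
    (P.complex.linearYonedaObj R Y).homology n ⟶ ModuleCat.of R (Abelian.Ext X Y n) :=
  ((P.complex.linearYonedaObj R Y).homologyIsCokernel _ n rfl).desc
    (Limits.CokernelCofork.ofπ (P.cyclesToExt Y n) (P.toCycles_cyclesToExt n))

lemma homologyπ_homologyToExt (n : ℕ) :
    (P.complex.linearYonedaObj R Y).homologyπ n ≫ P.homologyToExt Y n = P.cyclesToExt Y n :=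
  ((P.complex.linearYonedaObj R Y).homologyIsCokernel _ n rfl).fac _
    Limits.WalkingParallelPair.one

instance isIso_homologyToExt (n : ℕ) : IsIso (P.homologyToExt Y n) := by
  rw [ConcreteCategory.isIso_iff_bijective]
  have hπ (x) : P.homologyToExt Y n ((P.complex.linearYonedaObj R Y).homologyπ n x) =
      P.extMk (P.cocycleHom Y n x) (n + 1) rfl (P.d_comp_cocycleHom n x) :=
    ConcreteCategory.congr_hom (P.homologyπ_homologyToExt n) x
  constructor
  · rw [injective_iff_map_eq_zero]
    intro z hz
    obtain ⟨x, rfl⟩ := (ModuleCat.epi_iff_surjective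
      ((P.complex.linearYonedaObj R Y).homologyπ n)).mp inferInstance z
    replace hz := (hπ x).symm.trans hz
    cases n with
    | zero =>
      have := (P.extMk_zero_eq_zero_iff _ (P.d_comp_cocycleHom 0 x)).mp hz
      rw [(map_eq_zero_iff _ (P.cocycleHom_injective 0)).mp this, map_zero]
    | succ p =>
      obtain ⟨g, hg⟩ := (P.extMk_eq_zero_iff _ (p + 2) rfl (P.d_comp_cocycleHom _ x) p rfl).mp hz
      obtain rfl : (P.complex.linearYonedaObj R Y).toCycles p (p + 1) g = x :=
        P.cocycleHom_injective _ ((P.cocycleHom_toCycles p (p + 1) g).trans hg)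
      exact ConcreteCategory.congr_hom
        ((P.complex.linearYonedaObj R Y).toCycles_comp_homologyπ p (p + 1)) g
  · intro α
    obtain ⟨f, hf, rfl⟩ := P.extMk_surjective α (n + 1) rfl
    obtain ⟨x, rfl⟩ := P.exists_cocycleHom_eq n f hf
    exact ⟨_, hπ x⟩

variable {P P'} in
/-- The map induced by a morphism of projective resolutions on complexes of morphisms to `Y`. -/
noncomputable def Hom.linearYonedaMap {g : X ⟶ X'} (φ : Hom P P' g) (Y : ModuleCat.{u} R) :
    P'.complex.linearYonedaObj R Y ⟶ P.complex.linearYonedaObj R Y :=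
  (HomologicalComplex.unopFunctor _ _).map
    (((((linearYoneda R (ModuleCat.{u} R)).obj Y).rightOp.mapHomologicalComplex _).map φ.hom).op)

/-- The precomposition by a morphism as a morphism of modules. -/
noncomputable abbrev _root_.CategoryTheory.Abelian.Ext.precompHom (g : X ⟶ X')
    (Y : ModuleCat.{u} R) (n : ℕ) :
    ModuleCat.of R (Abelian.Ext X' Y n) ⟶ ModuleCat.of R (Abelian.Ext X Y n) :=
  ModuleCat.ofHom ((Ext.mk₀ g).precompOfLinear R Y (zero_add n))

variable {P P'} in
lemma homologyToExt_naturality {g : X ⟶ X'} (φ : Hom P P' g) (n : ℕ) :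
    HomologicalComplex.homologyMap (φ.linearYonedaMap Y) n ≫ P.homologyToExt Y n =
      P'.homologyToExt Y n ≫ Ext.precompHom g Y n := by
  rw [← cancel_epi ((P'.complex.linearYonedaObj R Y).homologyπ n),
    HomologicalComplex.homologyπ_naturality_assoc, homologyπ_homologyToExt,
    ← Category.assoc, homologyπ_homologyToExt]
  ext x
  have := mk₀_comp_extMk (P'.cocycleHom Y n x) (n + 1) rfl (P'.d_comp_cocycleHom n x) φ
  refine Eq.trans ?_ this.symm
  have h : P.cocycleHom Y n (HomologicalComplex.cyclesMap (φ.linearYonedaMap Y) n x) =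
      φ.hom.f n ≫ P'.cocycleHom Y n x :=
    ConcreteCategory.congr_hom (HomologicalComplex.cyclesMap_i (φ.linearYonedaMap Y) n) x
  refine (P.cyclesToExt_apply n _).trans ?_
  congr 1

lemma isoExt_naturality {g : X ⟶ X'} (φ : Hom P P' g) (n : ℕ) :
    ((Ext R (ModuleCat.{u} R) n).map g.op).app Y ≫ (P.isoExt n Y).hom =
      (P'.isoExt n Y).hom ≫ HomologicalComplex.homologyMap (φ.linearYonedaMap Y) n := by
  let F := ((linearYoneda R (ModuleCat.{u} R)).obj Y).rightOp
  have h1 := isoLeftDerivedObj_inv_naturality g P P' φ.hom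
    (by simpa using φ.hom_f_zero_comp_π_f_zero) F n
  have h2 := HomologicalComplex.homologyOp_hom_naturality (φ.linearYonedaMap Y) n
  replace h2 := congrArg Quiver.Hom.unop (CommSq.mk h2).vert_inv.w.symm
  replace h1 := congrArg Quiver.Hom.unop h1
  exact ((Category.assoc _ _ _).symm.trans
    (congrArg (· ≫ (HomologicalComplex.homologyOp (P.complex.linearYonedaObj R Y) n).inv.unop)
      h1)).trans ((Category.assoc _ _ _).trans
    ((congrArg ((P'.isoLeftDerivedObj F n).inv.unop ≫ ·) h2).trans (Category.assoc _ _ _).symm))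

end CategoryTheory.ProjectiveResolution

namespace CategoryTheory

open Abelian

variable {R : Type u} [CommRing R]

/-- The contravariant functor `X ↦ Ext X Y n` on modules. -/
noncomputable def Abelian.Ext.moduleFunctor (Y : ModuleCat.{u} R) (n : ℕ) :
    (ModuleCat.{u} R)ᵒᵖ ⥤ ModuleCat.{u} R where
  obj X := ModuleCat.of R (Abelian.Ext X.unop Y n)
  map f := Ext.precompHom f.unop Y n
  map_id X := by
    ext x
    exact Ext.mk₀_id_comp x
  map_comp f g := by
    ext x
    exact (Ext.mk₀_comp_mk₀_assoc g.unop f.unop x).symm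

/-- The comparison between the two definitions of `Ext` on modules. -/
noncomputable def extFlipObjIso (Y : ModuleCat.{u} R) (n : ℕ) :
    (_root_.Ext R (ModuleCat.{u} R) n).flip.obj Y ≅ Ext.moduleFunctor Y n :=
  NatIso.ofComponents
    (fun X ↦
      let P := projectiveResolution X.unop
      P.isoExt n Y ≪≫ @asIso _ _ _ _ (P.homologyToExt Y n) (P.isIso_homologyToExt n))
    (fun {X X'} f ↦ by
      let P := projectiveResolution X.unop
      let P' := projectiveResolution X'.unop
      let φ : ProjectiveResolution.Hom P' P f.unop :=
        { hom := ProjectiveResolution.lift f.unop _ _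
          hom_f_zero_comp_π_f_zero :=
            (ProjectiveResolution.lift_commutes_zero f.unop P' P).trans (by simp) }
      have h1 := ProjectiveResolution.isoExt_naturality P' P (Y := Y) φ n
      have h2 := ProjectiveResolution.homologyToExt_naturality (Y := Y) φ n
      exact ((Category.assoc _ _ _).symm.trans
        (congrArg (· ≫ P'.homologyToExt Y n) h1)).trans
        ((Category.assoc _ _ _).trans ((congrArg ((P.isoExt n Y).hom ≫ ·) h2).trans
          (Category.assoc _ _ _).symm)))

/-- The directed system of the modules `R ⧸ I ^ n`. -/
noncomputable abbrev quotientPowDiagram (I : Ideal R) : ℕᵒᵖ ⥤ ModuleCat.{u} R :=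
  localCohomology.ringModIdeals (localCohomology.idealPowersDiagram I)

/-- The `ℕ`-diagram of the modules `Ext (R ⧸ I ^ n) M j`. -/
noncomputable abbrev extPowDiagram (I : Ideal R) (M : ModuleCat.{u} R) (j : ℕ) :
    ℕᵒᵖᵒᵖ ⥤ ModuleCat.{u} R :=
  (quotientPowDiagram I).op ⋙ Ext.moduleFunctor M j

/-- Local cohomology of `M` as a colimit of modules. -/
noncomputable def localCohomologyObjIso (I : Ideal R) (M : ModuleCat.{u} R) (j : ℕ) :
    (localCohomology I j).obj M ≅ Limits.colimit (extPowDiagram I M j) :=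
  Limits.colimitObjIsoColimitCompEvaluation
    (localCohomology.diagram (localCohomology.idealPowersDiagram I) j) M ≪≫
  Limits.HasColimit.isoOfNatIso
    (Functor.isoWhiskerLeft (quotientPowDiagram I).op (extFlipObjIso M j))

end CategoryTheory

/-- `extIdeal` in terms of `Abelian.Ext`. -/
noncomputable def extIdealIso {R : Type u} [CommRing R] (𝔞 : Ideal R) (i : ℕ)
    (M : ModuleCat.{u} R) :
    extIdeal 𝔞 i M ≅ ModuleCat.of R (Abelian.Ext (ModuleCat.of R (R ⧸ 𝔞)) M i) :=
  (extFlipObjIso M i).app (Opposite.op (ModuleCat.of R (R ⧸ 𝔞)))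

namespace SerreClass

variable {R : Type u} [CommRing R] (S : SerreClass R)
variable {L M N : Type u} [AddCommGroup L] [Module R L] [AddCommGroup M] [Module R M]
  [AddCommGroup N] [Module R N]

lemma mem_of_injective (f : L →ₗ[R] M) (hf : Function.Injective f) (hM : S.mem M) : S.mem L :=
  ((S.mem_iff_of_ses f (LinearMap.range f).mkQ hf (Submodule.mkQ_surjective _)
    (Submodule.ker_mkQ _).symm).mp hM).1

lemma mem_of_surjective (g : M →ₗ[R] N) (hg : Function.Surjective g) (hM : S.mem M) : S.mem N :=
  ((S.mem_iff_of_ses (LinearMap.ker g).subtype g (Submodule.subtype_injective _) hg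
    (Submodule.range_subtype _)).mp hM).2

lemma mem_congr (e : L ≃ₗ[R] M) : S.mem L ↔ S.mem M :=
  ⟨S.mem_of_surjective e.toLinearMap e.surjective, S.mem_of_injective e.toLinearMap e.injective⟩

lemma mem_of_exact (f : L →ₗ[R] M) (g : M →ₗ[R] N) (hfg : Function.Exact f g)
    (hL : S.mem L) (hN : S.mem N) : S.mem M := by
  refine (S.mem_iff_of_ses (LinearMap.ker g).subtype g.rangeRestrict
    (Submodule.subtype_injective _) g.surjective_rangeRestrict (by simp)).mpr
    ⟨S.mem_of_surjective (f.codRestrict (LinearMap.ker g) hfg.apply_apply_eq_zero) ?_ hL,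
      S.mem_of_injective (LinearMap.range g).subtype (Submodule.subtype_injective _) hN⟩
  rintro ⟨x, hx⟩
  obtain ⟨y, rfl⟩ := (hfg x).mp hx
  exact ⟨y, rfl⟩

lemma mem_of_subsingleton [Subsingleton L] (hM : S.mem M) : S.mem L :=
  S.mem_of_injective (0 : L →ₗ[R] M) (Function.injective_of_subsingleton _) hM

end SerreClass

namespace Submodule

section

variable {R : Type*} [CommRing R] (I : Ideal R) (M : Type*) [AddCommGroup M] [Module R M]

/-- The submodule of the elements annihilated by a power of an ideal. -/
def powTorsion : Submodule R M where
  carrier := {x | ∃ n : ℕ, ∀ r ∈ I ^ n, r • x = 0}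
  zero_mem' := ⟨0, by simp⟩
  add_mem' := by
    rintro x y ⟨m, hm⟩ ⟨n, hn⟩
    refine ⟨m + n, fun r hr ↦ ?_⟩
    rw [smul_add, hm r (Ideal.pow_le_pow_right (Nat.le_add_right m n) hr),
      hn r (Ideal.pow_le_pow_right (Nat.le_add_left n m) hr), add_zero]
  smul_mem' := by
    rintro c x ⟨n, hn⟩
    exact ⟨n, fun r hr ↦ by rw [smul_comm, hn r hr, smul_zero]⟩

variable {I M}

lemma exists_pow_smul_eq_zero_of_fg {N : Submodule R M} (hN : N.FG) (h : N ≤ powTorsion I M) :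
    ∃ n : ℕ, ∀ r ∈ I ^ n, ∀ x ∈ N, r • x = 0 := by
  induction N, hN using Submodule.fg_induction with
  | singleton x =>
    obtain ⟨n, hn⟩ := h (mem_span_singleton_self x)
    refine ⟨n, fun r hr y hy ↦ ?_⟩
    obtain ⟨c, rfl⟩ := mem_span_singleton.mp hy
    rw [smul_comm, hn r hr, smul_zero]
  | sup N₁ N₂ _ _ h₁ h₂ =>
    obtain ⟨m, hm⟩ := h₁ (le_sup_left.trans h)
    obtain ⟨n, hn⟩ := h₂ (le_sup_right.trans h)
    refine ⟨m + n, fun r hr x hx ↦ ?_⟩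
    obtain ⟨y, hy, z, hz, rfl⟩ := mem_sup.mp hx
    rw [smul_add, hm r (Ideal.pow_le_pow_right (Nat.le_add_right m n) hr) y hy,
      hn r (Ideal.pow_le_pow_right (Nat.le_add_left n m) hr) z hz, add_zero]

variable (I M) in
lemma powTorsion_powTorsion : powTorsion I (powTorsion I M) = ⊤ := by
  rw [eq_top_iff]
  rintro ⟨x, n, hn⟩ -
  exact ⟨n, fun r hr ↦ Subtype.ext (hn r hr)⟩

lemma powTorsion_quotient_eq_top (h : powTorsion I M = ⊤) (N : Submodule R M) :
    powTorsion I (M ⧸ N) = ⊤ := by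
  rw [eq_top_iff]
  intro x _
  obtain ⟨x, rfl⟩ := N.mkQ_surjective x
  obtain ⟨n, hn⟩ := h.ge (mem_top (x := x))
  exact ⟨n, fun r hr ↦ by rw [← map_smul, hn r hr, map_zero]⟩

variable (I M) in
lemma powTorsion_quotient_powTorsion [IsNoetherianRing R] :
    powTorsion I (M ⧸ powTorsion I M) = ⊥ := by
  rw [eq_bot_iff]
  rintro x ⟨n, hn⟩
  obtain ⟨x, rfl⟩ := (powTorsion I M).mkQ_surjective x
  have hN : Submodule.map (LinearMap.toSpanSingleton R M x) (I ^ n) ≤ powTorsion I M := by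
    rintro _ ⟨r, hr, rfl⟩
    rw [LinearMap.toSpanSingleton_apply, ← Quotient.mk_eq_zero (powTorsion I M)]
    exact hn r hr
  obtain ⟨m, hm⟩ := exists_pow_smul_eq_zero_of_fg
    (FG.map _ ((isNoetherianRing_iff_ideal_fg R).mp inferInstance (I ^ n))) hN
  rw [mem_bot, mkQ_apply, Quotient.mk_eq_zero]
  refine ⟨m + n, fun r hr ↦ ?_⟩
  rw [pow_add] at hr
  induction hr using Submodule.mul_induction_on' with
  | mem_mul_mem a ha b hb =>
    rw [mul_smul]
    exact hm a ha _ ⟨b, hb, rfl⟩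
  | add a _ b _ ha hb => rw [add_smul, ha, hb, add_zero]

end

variable {R : Type u} [CommRing R] [IsNoetherianRing R] (I : Ideal R)

instance injective_powTorsion (E : Type u) [AddCommGroup E] [Module R E] [Module.Injective R E] :
    Module.Injective R (powTorsion I E) := by
  refine Module.Baer.injective fun J g ↦ ?_
  obtain ⟨n, hn⟩ := exists_pow_smul_eq_zero_of_fg (I := I)
    ((Module.Finite.iff_fg (N := LinearMap.range g)).mp inferInstance)
    (by rw [powTorsion_powTorsion]; exact le_top)
  obtain ⟨k, hk⟩ := I.exists_pow_inf_eq_pow_smul (M := R) J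
  have hker : Submodule.comap J.subtype (I ^ (n + k)) ≤
      LinearMap.ker ((powTorsion I E).subtype ∘ₗ g) := by
    intro x hx
    have hx' : (x : R) ∈ I ^ n • J := by
      have h := hk (n + k) (Nat.le_add_left k n)
      rw [Nat.add_sub_cancel] at h
      exact (h.le.trans (smul_mono_right _ inf_le_right)) ⟨by simpa using hx, x.2⟩
    refine Submodule.smul_le.mpr (fun r hr y _ ↦ ?_)
      ((Submodule.mem_smul_top_iff (I ^ n) J x).mpr hx')
    rw [LinearMap.mem_ker, map_smul]
    exact congrArg Subtype.val (hn r hr (g y) ⟨y, rfl⟩)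
  obtain ⟨h, hh⟩ := Module.Injective.out
    (Submodule.mapQ (Submodule.comap J.subtype (I ^ (n + k))) (I ^ (n + k)) J.subtype le_rfl)
    (LinearMap.ker_eq_bot.mp (by simp [Submodule.mapQ, ker_liftQ, LinearMap.ker_comp]))
    (Submodule.liftQ _ _ hker)
  refine ⟨LinearMap.codRestrict (powTorsion I E) (h ∘ₗ (I ^ (n + k)).mkQ) fun r ↦
    ⟨n + k, fun s hs ↦ ?_⟩, fun x hx ↦ Subtype.ext ?_⟩
  · rw [← map_smul, LinearMap.comp_apply, mkQ_apply,
      (Quotient.mk_eq_zero _).mpr (show s • r ∈ I ^ (n + k) from Ideal.mul_mem_right r _ hs),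
      map_zero]
  · exact hh (Submodule.Quotient.mk ⟨x, hx⟩)

end Submodule

namespace CategoryTheory

open Abelian

variable {R : Type u} [CommRing R]

namespace Abelian.Ext

variable {S : ShortComplex (ModuleCat.{u} R)} (hS : S.ShortExact) (X : ModuleCat.{u} R)

lemma exact_postcompOfLinear_f_g {S : ShortComplex (ModuleCat.{u} R)} (hS : S.ShortExact)
    (X : ModuleCat.{u} R) (n : ℕ) :
    Function.Exact ((mk₀ S.f).postcompOfLinear R X (add_zero n))
      ((mk₀ S.g).postcompOfLinear R X (add_zero n)) := fun x ↦
  ⟨fun hx ↦ covariant_sequence_exact₂ X hS x hx, by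
    rintro ⟨y, rfl⟩
    change (y.comp (mk₀ S.f) (add_zero n)).comp (mk₀ S.g) (add_zero n) = 0
    simp⟩

lemma exact_postcompOfLinear_g_extClass {n m : ℕ} (h : n + 1 = m) :
    Function.Exact ((mk₀ S.g).postcompOfLinear R X (add_zero n))
      (hS.extClass.postcompOfLinear R X h) := fun x ↦
  ⟨fun hx ↦ covariant_sequence_exact₃ X hS x h hx, by
    rintro ⟨y, rfl⟩
    change (y.comp (mk₀ S.g) (add_zero n)).comp hS.extClass h = 0
    simp⟩

lemma exact_postcompOfLinear_extClass_f {n m : ℕ} (h : n + 1 = m) :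
    Function.Exact (hS.extClass.postcompOfLinear R X h)
      ((mk₀ S.f).postcompOfLinear R X (add_zero m)) := fun x ↦
  ⟨fun hx ↦ covariant_sequence_exact₁ X hS x hx h, by
    rintro ⟨y, rfl⟩
    change (y.comp hS.extClass h).comp (mk₀ S.f) (add_zero m) = 0
    simp⟩

end Abelian.Ext

/-- The short complex `0 → N → M → M ⧸ N → 0` attached to a submodule. -/
noncomputable abbrev _root_.Submodule.shortComplex {M : ModuleCat.{u} R} (N : Submodule R M) :
    ShortComplex (ModuleCat.{u} R) where
  X₁ := ModuleCat.of R N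
  X₂ := M
  X₃ := ModuleCat.of R (M ⧸ N)
  f := ModuleCat.ofHom N.subtype
  g := ModuleCat.ofHom N.mkQ
  zero := by ext; simp

lemma _root_.Submodule.shortComplex_shortExact {M : ModuleCat.{u} R} (N : Submodule R M) :
    N.shortComplex.ShortExact where
  exact := (ShortComplex.ShortExact.moduleCat_exact_iff_function_exact _).mpr
    (LinearMap.exact_subtype_mkQ N)
  mono_f := (ModuleCat.mono_iff_injective _).mpr N.injective_subtype
  epi_g := (ModuleCat.epi_iff_surjective _).mpr N.mkQ_surjective

/-- The short complex `0 → M → N → N ⧸ f.range → 0` attached to an injective linear map. -/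
noncomputable abbrev _root_.LinearMap.cokernelShortComplex {M N : ModuleCat.{u} R}
    (f : M →ₗ[R] N) :
    ShortComplex (ModuleCat.{u} R) where
  X₁ := M
  X₂ := N
  X₃ := ModuleCat.of R (N ⧸ LinearMap.range f)
  f := ModuleCat.ofHom f
  g := ModuleCat.ofHom (LinearMap.range f).mkQ
  zero := by ext; simp

lemma _root_.LinearMap.cokernelShortComplex_shortExact {M N : ModuleCat.{u} R} (f : M →ₗ[R] N)
    (hf : Function.Injective f) : f.cokernelShortComplex.ShortExact where
  exact := (ShortComplex.ShortExact.moduleCat_exact_iff_function_exact _).mpr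
    (LinearMap.exact_map_mkQ_range f)
  mono_f := (ModuleCat.mono_iff_injective _).mpr hf
  epi_g := (ModuleCat.epi_iff_surjective _).mpr (Submodule.mkQ_surjective _)

/-- The transition morphism `R ⧸ I ^ m ⟶ R ⧸ I ^ n`. -/
noncomputable abbrev quotientPowMap (I : Ideal R) {n m : ℕ} (h : n ≤ m) :
    ModuleCat.of R (R ⧸ I ^ m) ⟶ ModuleCat.of R (R ⧸ I ^ n) :=
  (quotientPowDiagram I).map (homOfLE h).op

variable (I : Ideal R)

lemma exists_injective_of_powTorsion_eq_top [IsNoetherianRing R] (T : ModuleCat.{u} R)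
    (hT : Submodule.powTorsion I T = ⊤) :
    ∃ (E : ModuleCat.{u} R) (_ : Injective E) (f : T →ₗ[R] E), Function.Injective f ∧
      Submodule.powTorsion I E = ⊤ := by
  let E := Injective.under T
  have : Injective (ModuleCat.of R E) := inferInstanceAs (Injective (Injective.under T))
  have : Module.Injective R E := Module.injective_module_of_injective_object R E
  have hι : Function.Injective (Injective.ι T) := (ModuleCat.mono_iff_injective _).mp inferInstance
  refine ⟨ModuleCat.of R (Submodule.powTorsion I E),
    Module.injective_object_of_injective_module R _,
    LinearMap.codRestrict _ (Injective.ι T).hom fun x ↦ ?_,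
    fun x y h ↦ hι (congrArg Subtype.val h),
    Submodule.powTorsion_powTorsion I E⟩
  obtain ⟨n, hn⟩ := hT.ge (Submodule.mem_top (x := x))
  exact ⟨n, fun r hr ↦ by rw [← map_smul, hn r hr, map_zero]⟩

lemma exists_quotientPowMap_comp_eq (T Q : ModuleCat.{u} R) (hT : Submodule.powTorsion I T = ⊤)
    (g : T ⟶ Q) (hg : Function.Surjective g) (n : ℕ) (f : ModuleCat.of R (R ⧸ I ^ n) ⟶ Q) :
    ∃ (m : ℕ) (h : n ≤ m) (f' : ModuleCat.of R (R ⧸ I ^ m) ⟶ T),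
      quotientPowMap I h ≫ f = f' ≫ g := by
  obtain ⟨e, he⟩ := hg (f (1 : R ⧸ I ^ n))
  obtain ⟨k, hk⟩ := hT.ge (Submodule.mem_top (x := e))
  refine ⟨n + k, Nat.le_add_right n k, ModuleCat.ofHom (Submodule.liftQ (I ^ (n + k))
    (LinearMap.toSpanSingleton R T e) fun r hr ↦
      hk r (Ideal.pow_le_pow_right (Nat.le_add_left k n) hr)), ?_⟩
  ext
  exact he.symm.trans (congrArg g (one_smul R e).symm)

lemma exists_quotientPowMap_comp_eq_zero [IsNoetherianRing R] (j : ℕ) (T : ModuleCat.{u} R)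
    (hT : Submodule.powTorsion I T = ⊤) (n : ℕ)
    (x : Abelian.Ext (ModuleCat.of R (R ⧸ I ^ n)) T (j + 1)) :
    ∃ (m : ℕ) (h : n ≤ m), (Ext.mk₀ (quotientPowMap I h)).comp x (zero_add _) = 0 := by
  induction j generalizing T n with
  | zero =>
    obtain ⟨E, _, f, hf, hE⟩ := exists_injective_of_powTorsion_eq_top I T hT
    have hS := f.cokernelShortComplex_shortExact hf
    obtain ⟨y, rfl⟩ := Ext.covariant_sequence_exact₁ _ hS x (Ext.eq_zero_of_injective _) rfl
    obtain ⟨y, rfl⟩ := (Ext.mk₀_bijective _ _).surjective y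
    obtain ⟨m, h, y', hy⟩ := exists_quotientPowMap_comp_eq I E _ hE f.cokernelShortComplex.g
      (Submodule.mkQ_surjective _) n y
    refine ⟨m, h, ?_⟩
    rw [Ext.mk₀_comp_mk₀_assoc, hy, ← Ext.mk₀_comp_mk₀_assoc, hS.comp_extClass, Ext.comp_zero]
  | succ j ih =>
    obtain ⟨E, _, f, hf, hE⟩ := exists_injective_of_powTorsion_eq_top I T hT
    have hS := f.cokernelShortComplex_shortExact hf
    obtain ⟨y, rfl⟩ := Ext.covariant_sequence_exact₁ _ hS x (Ext.eq_zero_of_injective _) rfl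
    obtain ⟨m, h, hy⟩ := ih _ (Submodule.powTorsion_quotient_eq_top hE _) n y
    refine ⟨m, h, ?_⟩
    rw [← Ext.comp_assoc _ _ _ (zero_add _) rfl (by omega), hy, Ext.zero_comp]

end CategoryTheory

namespace CategoryTheory

open Abelian

variable {R : Type u} [CommRing R] (I : Ideal R)

lemma smul_apply_one_eq_zero {J : Ideal R} {M : ModuleCat.{u} R}
    (f : ModuleCat.of R (R ⧸ J) ⟶ M) {r : R} (hr : r ∈ J) : r • f (1 : R ⧸ J) = 0 := by
  rw [← map_smul, show r • (1 : R ⧸ J) = 0 from ?_, map_zero]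
  rw [← map_one (Ideal.Quotient.mk J), ← Ideal.Quotient.mk_eq_mk, ← Submodule.Quotient.mk_smul,
    Submodule.Quotient.mk_eq_zero]
  simpa using hr

lemma subsingleton_ext_zero_of_powTorsion_eq_bot (N : ModuleCat.{u} R)
    (hN : Submodule.powTorsion I N = ⊥) {J : Ideal R} {n : ℕ} (hJ : I ^ n ≤ J) :
    Subsingleton (Abelian.Ext (ModuleCat.of R (R ⧸ J)) N 0) := by
  refine subsingleton_of_forall_eq 0 fun x ↦ ?_
  obtain ⟨f, rfl⟩ := (Ext.mk₀_bijective _ _).surjective x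
  have hf : f (1 : R ⧸ J) = 0 :=
    (Submodule.mem_bot R).mp (hN.le ⟨n, fun r hr ↦ smul_apply_one_eq_zero f (hJ hr)⟩)
  obtain rfl : f = 0 := by
    ext
    exact hf
  exact Ext.mk₀_zero _ _

lemma exists_injective_of_powTorsion_eq_bot [IsNoetherianRing R] (N : ModuleCat.{u} R)
    (hN : Submodule.powTorsion I N = ⊥) :
    ∃ (E : ModuleCat.{u} R) (f : N →ₗ[R] E), Function.Injective f ∧
      ∀ (J : Ideal R) (n : ℕ), I ^ n ≤ J → ∀ s : ℕ,
        Subsingleton (Abelian.Ext (ModuleCat.of R (R ⧸ J)) E s) := by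
  let E := Injective.under N
  have : Injective (ModuleCat.of R E) := inferInstanceAs (Injective (Injective.under N))
  have : Module.Injective R E := Module.injective_module_of_injective_object R E
  have : Injective (ModuleCat.of R (Submodule.powTorsion I E)) :=
    Module.injective_object_of_injective_module R _
  have hι : Function.Injective (Injective.ι N) := (ModuleCat.mono_iff_injective _).mp inferInstance
  refine ⟨ModuleCat.of R (E ⧸ Submodule.powTorsion I E),
    (Submodule.powTorsion I E).mkQ ∘ₗ (Injective.ι N).hom, ?_, fun J n hJ s ↦ ?_⟩
  · rw [← LinearMap.ker_eq_bot, eq_bot_iff, ← hN]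
    intro x hx
    obtain ⟨n, hn⟩ := (Submodule.Quotient.mk_eq_zero _).mp hx
    refine ⟨n, fun r hr ↦ hι ?_⟩
    rw [map_smul, map_zero]
    exact hn r hr
  · cases s with
    | zero =>
      exact subsingleton_ext_zero_of_powTorsion_eq_bot I _
        (Submodule.powTorsion_quotient_powTorsion I E) hJ
    | succ s =>
      refine subsingleton_of_forall_eq 0 fun x ↦ ?_
      have hS := (Submodule.powTorsion I E).shortComplex_shortExact
      obtain ⟨y, rfl⟩ := Ext.covariant_sequence_exact₃ _ hS x rfl (Ext.eq_zero_of_injective _)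
      rw [Ext.eq_zero_of_injective y, Ext.zero_comp]

/-- Postcomposition as a natural transformation. -/
noncomputable def Abelian.Ext.moduleFunctorMap {Y Z : ModuleCat.{u} R} {a b c : ℕ}
    (β : Abelian.Ext Y Z b) (h : a + b = c) :
    Ext.moduleFunctor Y a ⟶ Ext.moduleFunctor Z c where
  app X := ModuleCat.ofHom (β.postcompOfLinear R X.unop h)
  naturality X X' f := by
    ext x
    exact Ext.comp_assoc _ _ _ (zero_add _) h (by omega)

instance ModuleCat.preservesColimitsOfShape_forget {J : Type} [SmallCategory J] [IsFiltered J] :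
    Limits.PreservesColimitsOfShape J (forget (ModuleCat.{u} R)) :=
  (Limits.preservesSmallestFilteredColimits_of_preservesFilteredColimits
    (forget (ModuleCat.{u} R))).preserves_filtered_colimits J

lemma Limits.isIso_colimMap_of_exists {J : Type} [SmallCategory J] [IsFiltered J]
    {F G : J ⥤ ModuleCat.{u} R} (α : F ⟶ G)
    (h₁ : ∀ (j : J) (x : F.obj j), α.app j x = 0 → ∃ (k : J) (f : j ⟶ k), F.map f x = 0)
    (h₂ : ∀ (j : J) (y : G.obj j), ∃ (k : J) (f : j ⟶ k) (x : F.obj k),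
      α.app k x = G.map f y) :
    IsIso (colimMap α) := by
  rw [ConcreteCategory.isIso_iff_bijective]
  constructor
  · rw [injective_iff_map_eq_zero]
    intro z hz
    obtain ⟨j, x, rfl⟩ := Concrete.colimit_exists_rep F z
    have h : colimit.ι G j (α.app j x) = 0 :=
      (ConcreteCategory.congr_hom (ι_colimMap α j) x).symm.trans hz
    obtain ⟨k, f, hf⟩ := Concrete.colimit_rep_eq_zero _ G j _ h
    have hf' : α.app k (F.map f x) = 0 :=
      (ConcreteCategory.congr_hom (α.naturality f) x).trans hf
    obtain ⟨l, g, hg⟩ := h₁ k _ hf'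
    refine (ConcreteCategory.congr_hom (colimit.w F (f ≫ g)) x).symm.trans ?_
    rw [F.map_comp]
    exact (congrArg (colimit.ι F l) hg).trans (map_zero _)
  · intro z
    obtain ⟨j, y, rfl⟩ := Concrete.colimit_exists_rep G z
    obtain ⟨k, f, x, hx⟩ := h₂ j y
    refine ⟨colimit.ι F k x, (ConcreteCategory.congr_hom (ι_colimMap α k) x).trans ?_⟩
    exact (congrArg (colimit.ι G k) hx).trans (ConcreteCategory.congr_hom (colimit.w G f) y)

lemma nonempty_colimit_extPowDiagram_iso {Y Z : ModuleCat.{u} R} {a b c : ℕ}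
    (β : Abelian.Ext Y Z b) (h : a + b = c)
    (h₁ : ∀ (n : ℕ) (x : Abelian.Ext (ModuleCat.of R (R ⧸ I ^ n)) Y a), x.comp β h = 0 →
      ∃ (m : ℕ) (hm : n ≤ m), (Ext.mk₀ (quotientPowMap I hm)).comp x (zero_add a) = 0)
    (h₂ : ∀ (n : ℕ) (y : Abelian.Ext (ModuleCat.of R (R ⧸ I ^ n)) Z c),
      ∃ (m : ℕ) (hm : n ≤ m) (x : Abelian.Ext (ModuleCat.of R (R ⧸ I ^ m)) Y a),
        x.comp β h = (Ext.mk₀ (quotientPowMap I hm)).comp y (zero_add c)) :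
    Nonempty (Limits.colimit (extPowDiagram I Y a) ≅ Limits.colimit (extPowDiagram I Z c)) := by
  have := Limits.isIso_colimMap_of_exists
    (Functor.whiskerLeft (quotientPowDiagram I).op (Ext.moduleFunctorMap β h))
    (fun j x hx ↦ by
      obtain ⟨m, hm, hx⟩ := h₁ j.unop.unop x hx
      exact ⟨Opposite.op (Opposite.op m), (homOfLE hm).op.op, hx⟩)
    (fun j y ↦ by
      obtain ⟨m, hm, x, hx⟩ := h₂ j.unop.unop y
      exact ⟨Opposite.op (Opposite.op m), (homOfLE hm).op.op, x, hx⟩)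
  exact ⟨asIso (Limits.colimMap (Functor.whiskerLeft (quotientPowDiagram I).op
    (Ext.moduleFunctorMap β h)))⟩

/-- Evaluation at `1` of a class in `Ext (R ⧸ J) M 0`. -/
noncomputable def extZeroEval (J : Ideal R) (M : ModuleCat.{u} R) :
    Abelian.Ext (ModuleCat.of R (R ⧸ J)) M 0 →ₗ[R] M :=
  LinearMap.applyₗ (1 : R ⧸ J) ∘ₗ ModuleCat.homLinearEquiv.toLinearMap ∘ₗ
    (Ext.linearEquiv₀ (R := R)).toLinearMap

lemma extZeroEval_mk₀ (J : Ideal R) {M : ModuleCat.{u} R} (f : ModuleCat.of R (R ⧸ J) ⟶ M) :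
    extZeroEval J M (Ext.mk₀ f) = f (1 : R ⧸ J) := by
  have : Ext.linearEquiv₀ (R := R) (Ext.mk₀ f) = f := (Ext.linearEquiv₀ (R := R)).right_inv f
  exact congrArg (fun g : ModuleCat.of R (R ⧸ J) ⟶ M ↦ g (1 : R ⧸ J)) this

lemma extZeroEval_injective (J : Ideal R) (M : ModuleCat.{u} R) :
    Function.Injective (extZeroEval J M) := by
  rw [injective_iff_map_eq_zero]
  intro x hx
  obtain ⟨f, rfl⟩ := (Ext.mk₀_bijective _ _).surjective x
  rw [extZeroEval_mk₀] at hx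
  obtain rfl : f = 0 := by
    ext
    exact hx
  exact Ext.mk₀_zero _ _

lemma smul_extZeroEval_eq_zero {J : Ideal R} {M : ModuleCat.{u} R}
    (x : Abelian.Ext (ModuleCat.of R (R ⧸ J)) M 0) {r : R} (hr : r ∈ J) :
    r • extZeroEval J M x = 0 := by
  obtain ⟨f, rfl⟩ := (Ext.mk₀_bijective _ _).surjective x
  rw [extZeroEval_mk₀, smul_apply_one_eq_zero f hr]

lemma exists_extZeroEval_eq {J : Ideal R} {M : ModuleCat.{u} R} (y : M)
    (hy : ∀ r ∈ J, r • y = 0) : ∃ x, extZeroEval J M x = y :=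
  ⟨Ext.mk₀ (ModuleCat.ofHom (Submodule.liftQ J (LinearMap.toSpanSingleton R M y) hy)),
    (extZeroEval_mk₀ _ _).trans (one_smul R y)⟩

/-- The canonical cocone exhibiting the `I`-power torsion as a colimit. -/
noncomputable def extPowCocone (M : ModuleCat.{u} R) : Limits.Cocone (extPowDiagram I M 0) where
  pt := M
  ι :=
    { app j := ModuleCat.ofHom (extZeroEval (I ^ j.unop.unop) M)
      naturality j k f := by
        ext x
        obtain ⟨g, rfl⟩ := (Ext.mk₀_bijective _ _).surjective x
        refine Eq.trans ?_ (extZeroEval_mk₀ _ g).symm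
        refine (congrArg (extZeroEval (I ^ k.unop.unop) M) (Ext.mk₀_comp_mk₀ _ _)).trans ?_
        exact extZeroEval_mk₀ _ _ }

lemma nonempty_colimit_extPowDiagram_zero_linearEquiv (M : ModuleCat.{u} R) :
    Nonempty ((Limits.colimit (extPowDiagram I M 0) : ModuleCat.{u} R) ≃ₗ[R]
      Submodule.powTorsion I M) := by
  let φ := (Limits.colimit.desc _ (extPowCocone I M)).hom
  have hφ (j) (x) : φ (Limits.colimit.ι (extPowDiagram I M 0) j x) =
      extZeroEval (I ^ j.unop.unop) M x :=
    ConcreteCategory.congr_hom (Limits.colimit.ι_desc (extPowCocone I M) j) x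
  have hinj : Function.Injective φ := by
    rw [injective_iff_map_eq_zero]
    intro z hz
    obtain ⟨j, x, rfl⟩ := Limits.Concrete.colimit_exists_rep _ z
    rw [hφ] at hz
    have hx : x = (0 : (extPowDiagram I M 0).obj j) :=
      extZeroEval_injective _ _ (hz.trans (map_zero _).symm)
    rw [hx, map_zero]
  have hrange : LinearMap.range φ = Submodule.powTorsion I M := by
    ext y
    constructor
    · rintro ⟨z, rfl⟩
      obtain ⟨j, x, rfl⟩ := Limits.Concrete.colimit_exists_rep _ z
      rw [hφ]
      refine ⟨j.unop.unop, fun r hr ↦ ?_⟩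
      exact smul_extZeroEval_eq_zero x hr
    · rintro ⟨n, hn⟩
      obtain ⟨x, hx⟩ := exists_extZeroEval_eq y hn
      exact ⟨Limits.colimit.ι (extPowDiagram I M 0) (Opposite.op (Opposite.op n)) x,
        (hφ _ _).trans hx⟩
  exact ⟨(LinearEquiv.ofInjective φ hinj).trans (LinearEquiv.ofEq _ _ hrange)⟩

end CategoryTheory

namespace CategoryTheory

open Abelian

section

variable {R : Type u} [CommRing R] (I : Ideal R)

lemma nonempty_colimit_extPowDiagram_succ_iso_quotient [IsNoetherianRing R]
    (M : ModuleCat.{u} R) (j : ℕ) :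
    Nonempty (Limits.colimit (extPowDiagram I M (j + 1)) ≅
      Limits.colimit (extPowDiagram I (ModuleCat.of R (M ⧸ Submodule.powTorsion I M))
        (j + 1))) := by
  have hS := (Submodule.powTorsion I M).shortComplex_shortExact
  have hT := Submodule.powTorsion_powTorsion I M
  refine nonempty_colimit_extPowDiagram_iso I
    (Ext.mk₀ (Submodule.powTorsion I M).shortComplex.g) (add_zero (j + 1))
    (fun n x hx ↦ ?_) (fun n y ↦ ?_)
  · obtain ⟨z, rfl⟩ := Ext.covariant_sequence_exact₂ _ hS x hx
    obtain ⟨m, hm, hz⟩ := exists_quotientPowMap_comp_eq_zero I j _ hT n z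
    refine ⟨m, hm, ?_⟩
    rw [← Ext.comp_assoc _ _ _ (zero_add _) (add_zero _) (by omega), hz, Ext.zero_comp]
  · obtain ⟨m, hm, hz⟩ :=
      exists_quotientPowMap_comp_eq_zero I (j + 1) _ hT n (y.comp hS.extClass rfl)
    refine ⟨m, hm, Ext.covariant_sequence_exact₃ _ hS _ rfl ?_⟩
    rw [Ext.comp_assoc _ _ _ (zero_add _) rfl (by omega), hz]

lemma nonempty_colimit_extPowDiagram_iso_succ {S : ShortComplex (ModuleCat.{u} R)}
    (hS : S.ShortExact)
    (hE : ∀ n s : ℕ, Subsingleton (Abelian.Ext (ModuleCat.of R (R ⧸ I ^ n)) S.X₂ s)) (j : ℕ) :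
    Nonempty (Limits.colimit (extPowDiagram I S.X₃ j) ≅
      Limits.colimit (extPowDiagram I S.X₁ (j + 1))) := by
  refine nonempty_colimit_extPowDiagram_iso I hS.extClass rfl
    (fun n x hx ↦ ⟨n, le_rfl, ?_⟩) (fun n y ↦ ⟨n, le_rfl, ?_⟩)
  · obtain ⟨z, rfl⟩ := Ext.covariant_sequence_exact₃ _ hS x rfl hx
    rw [Subsingleton.elim z 0, Ext.zero_comp, Ext.comp_zero]
  · exact Ext.covariant_sequence_exact₁ _ hS _ (Subsingleton.elim _ _) rfl

end

end CategoryTheory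

namespace SerreClass

open Abelian

variable {R : Type u} [CommRing R] (S : SerreClass R) (I J : Ideal R)

/-- All the modules `Ext (R ⧸ J) N s` belong to the Serre class. -/
def ExtMem (N : ModuleCat.{u} R) : Prop :=
  ∀ s : ℕ, S.mem (Abelian.Ext (ModuleCat.of R (R ⧸ J)) N s)

variable {S J}

lemma mem_ext_congr {N N' : ModuleCat.{u} R} (e : N ≅ N') (s : ℕ)
    (h : S.mem (Abelian.Ext (ModuleCat.of R (R ⧸ J)) N s)) :
    S.mem (Abelian.Ext (ModuleCat.of R (R ⧸ J)) N' s) := by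
  refine S.mem_of_surjective ((Ext.mk₀ e.hom).postcompOfLinear R _ (add_zero s)) (fun x ↦
    ⟨x.comp (Ext.mk₀ e.inv) (add_zero s), ?_⟩) h
  change (x.comp (Ext.mk₀ e.inv) (add_zero s)).comp (Ext.mk₀ e.hom) (add_zero s) = x
  simp

lemma ExtMem.congr {N N' : ModuleCat.{u} R} (e : N ≅ N') (h : S.ExtMem J N) : S.ExtMem J N' :=
  fun s ↦ mem_ext_congr e s (h s)

section ShortExact

variable {C : ShortComplex (ModuleCat.{u} R)}

lemma ExtMem.X₃ (hC : C.ShortExact) (h₁ : S.ExtMem J C.X₁) (h₂ : S.ExtMem J C.X₂) :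
    S.ExtMem J C.X₃ := fun s ↦
  S.mem_of_exact _ _ (Ext.exact_postcompOfLinear_g_extClass hC _ rfl) (h₂ s) (h₁ (s + 1))

lemma ExtMem.X₁ (hC : C.ShortExact) (h₂ : S.ExtMem J C.X₂) (h₃ : S.ExtMem J C.X₃) :
    S.ExtMem J C.X₁ := fun s ↦ by
  cases s with
  | succ s =>
    exact S.mem_of_exact _ _ (Ext.exact_postcompOfLinear_extClass_f hC _ rfl) (h₃ s) (h₂ (s + 1))
  | zero =>
    have := hC.mono_f
    exact S.mem_of_injective ((Ext.mk₀ C.f).postcompOfLinear R _ (add_zero 0))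
      (Ext.postcomp_mk₀_injective_of_mono _ C.f) (h₂ 0)

end ShortExact

/-- A local cohomology module, as a colimit of modules. -/
noncomputable abbrev _root_.localCohomologyColimit (M : ModuleCat.{u} R) (j : ℕ) :
    ModuleCat.{u} R :=
  Limits.colimit (extPowDiagram I M j)

lemma nonempty_localCohomologyColimit_zero_iso (M : ModuleCat.{u} R) :
    Nonempty (localCohomologyColimit I M 0 ≅ ModuleCat.of R (Submodule.powTorsion I M)) :=
  (nonempty_colimit_extPowDiagram_zero_linearEquiv I M).map fun e ↦ e.toModuleIso

end SerreClass

namespace SerreClass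

open Abelian

variable {R : Type u} [CommRing R] {S : SerreClass R} {I J : Ideal R}

lemma exists_shortExact_of_powTorsion_eq_bot [IsNoetherianRing R] (hIJ : I ≤ J)
    (N : ModuleCat.{u} R) (hN : Submodule.powTorsion I N = ⊥) :
    ∃ (E L : ModuleCat.{u} R) (f : N ⟶ E) (g : E ⟶ L) (w : f ≫ g = 0),
      (ShortComplex.mk f g w).ShortExact ∧
      (∀ s, Subsingleton (Abelian.Ext (ModuleCat.of R (R ⧸ J)) E s)) ∧
      ∀ j, Nonempty (localCohomologyColimit I L j ≅ localCohomologyColimit I N (j + 1)) := by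
  obtain ⟨E, f, hf, hE⟩ := exists_injective_of_powTorsion_eq_bot I N hN
  have hC := f.cokernelShortComplex_shortExact hf
  exact ⟨E, _, _, _, f.cokernelShortComplex.zero, hC, hE J 1 (by simpa using hIJ),
    nonempty_colimit_extPowDiagram_iso_succ I hC fun n s ↦ hE (I ^ n) n le_rfl s⟩

lemma subsingleton_localCohomologyColimit_zero (N : ModuleCat.{u} R)
    (hN : Submodule.powTorsion I N = ⊥) : Subsingleton (localCohomologyColimit I N 0) := by
  obtain ⟨e⟩ := nonempty_colimit_extPowDiagram_zero_linearEquiv I N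
  have : Subsingleton (Submodule.powTorsion I N) := by
    rw [hN]
    infer_instance
  exact e.toEquiv.subsingleton

lemma ExtMem.of_subsingleton {N N' : ModuleCat.{u} R} [Subsingleton N] (h : S.ExtMem J N') :
    S.ExtMem J N := fun s ↦ by
  have : Subsingleton (Abelian.Ext (ModuleCat.of R (R ⧸ J)) N s) := by
    refine subsingleton_of_forall_eq 0 fun x ↦ ?_
    rw [← Ext.comp_mk₀_id x, (ModuleCat.isZero_of_subsingleton N).eq_of_src (𝟙 N) 0, Ext.mk₀_zero,
      Ext.comp_zero]
  exact S.mem_of_subsingleton (h s)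

lemma ExtMem.powTorsion {M : ModuleCat.{u} R} (h : S.ExtMem J (localCohomologyColimit I M 0)) :
    S.ExtMem J (ModuleCat.of R (Submodule.powTorsion I M)) :=
  h.congr (nonempty_localCohomologyColimit_zero_iso I M).some

lemma mem_extIdeal_iff (𝔞 : Ideal R) (s : ℕ) (M : ModuleCat.{u} R) :
    S.mem (extIdeal 𝔞 s M) ↔ S.mem (Abelian.Ext (ModuleCat.of R (R ⧸ 𝔞)) M s) :=
  S.mem_congr (extIdealIso 𝔞 s M).toLinearEquiv

variable [IsNoetherianRing R]

lemma ExtMem.localCohomologyColimit_quotient {M : ModuleCat.{u} R} {j : ℕ}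
    (h : S.ExtMem J (localCohomologyColimit I M (j + 1))) :
    S.ExtMem J (localCohomologyColimit I (ModuleCat.of R (M ⧸ Submodule.powTorsion I M)) (j + 1)) :=
  h.congr (nonempty_colimit_extPowDiagram_succ_iso_quotient I M j).some

lemma mem_ext_of_forall_localCohomologyColimit (hIJ : I ≤ J) (s : ℕ) (M : ModuleCat.{u} R)
    (h : ∀ j, S.ExtMem J (localCohomologyColimit I M j)) :
    S.mem (Abelian.Ext (ModuleCat.of R (R ⧸ J)) M s) := by
  induction s generalizing M with
  | zero =>
    have hC := (Submodule.powTorsion I M).shortComplex_shortExact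
    have hN := Submodule.powTorsion_quotient_powTorsion I M
    refine S.mem_of_exact _ _ (Ext.exact_postcompOfLinear_f_g hC _ 0) ((h 0).powTorsion 0) ?_
    have := subsingleton_ext_zero_of_powTorsion_eq_bot I
      (ModuleCat.of R (M ⧸ Submodule.powTorsion I M)) hN (n := 1) (J := J) (by simpa using hIJ)
    exact S.mem_of_subsingleton (h 0 0)
  | succ s ih =>
    have hC := (Submodule.powTorsion I M).shortComplex_shortExact
    have hN := Submodule.powTorsion_quotient_powTorsion I M
    refine S.mem_of_exact _ _ (Ext.exact_postcompOfLinear_f_g hC _ (s + 1))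
      ((h 0).powTorsion (s + 1)) ?_
    obtain ⟨E, L, f, g, w, hD, hE, e⟩ := exists_shortExact_of_powTorsion_eq_bot hIJ
      (ModuleCat.of R (M ⧸ Submodule.powTorsion I M)) hN
    have hL := ih L fun j ↦ (h (j + 1)).localCohomologyColimit_quotient.congr (e j).some.symm
    have := hE (s + 1)
    exact S.mem_of_exact _ _ (Ext.exact_postcompOfLinear_extClass_f hD _ rfl) hL
      (S.mem_of_subsingleton hL)

lemma extMem_localCohomologyColimit_of_ne (hIJ : I ≤ J) (t : ℕ) (M : ModuleCat.{u} R)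
    (hM : S.ExtMem J M) (h : ∀ j, j ≠ t → S.ExtMem J (localCohomologyColimit I M j)) :
    S.ExtMem J (localCohomologyColimit I M t) := by
  induction t generalizing M with
  | zero =>
    have hC := (Submodule.powTorsion I M).shortComplex_shortExact
    have := subsingleton_localCohomologyColimit_zero (I := I)
      (ModuleCat.of R (M ⧸ Submodule.powTorsion I M)) (Submodule.powTorsion_quotient_powTorsion I M)
    refine (ExtMem.X₁ hC hM fun s ↦
      mem_ext_of_forall_localCohomologyColimit hIJ s _ fun j ↦ ?_).congr
      (nonempty_localCohomologyColimit_zero_iso I M).some.symm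
    cases j with
    | zero => exact hM.of_subsingleton
    | succ j => exact (h (j + 1) (by omega)).localCohomologyColimit_quotient
  | succ t ih =>
    have hC := (Submodule.powTorsion I M).shortComplex_shortExact
    obtain ⟨E, L, f, g, w, hD, hE, e⟩ := exists_shortExact_of_powTorsion_eq_bot hIJ
      (ModuleCat.of R (M ⧸ Submodule.powTorsion I M)) (Submodule.powTorsion_quotient_powTorsion I M)
    have hN : S.ExtMem J (ModuleCat.of R (M ⧸ Submodule.powTorsion I M)) :=
      ExtMem.X₃ hC (h 0 (by omega)).powTorsion hM
    have hL : S.ExtMem J L :=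
      ExtMem.X₃ hD hN fun s ↦ have := hE s; S.mem_of_subsingleton (hM 0)
    exact (ih L hL fun j hj ↦
      (h (j + 1) (by omega)).localCohomologyColimit_quotient.congr (e j).some.symm).congr
      ((e t).some ≪≫ (nonempty_colimit_extPowDiagram_succ_iso_quotient I M t).some.symm)

end SerreClass

/-- Yang–Shen, Corollary 1.2 (module case): if all `Ext` modules of `M` against `R/𝔞` lie in a
Serre class `S`, and all `Ext^s_R(R/𝔞, H^j_𝔟(M))` lie in `S` for `j ≠ t`, then also
`Ext^s_R(R/𝔞, H^t_𝔟(M)) ∈ S` for all `s`. -/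
theorem serreClass_mem_ext_localCohomology_of_ne
    {R : Type u} [CommRing R] [IsNoetherianRing R] (S : SerreClass R)
    (𝔞 𝔟 : Ideal R) (h𝔟𝔞 : 𝔟 ≤ 𝔞) (M : ModuleCat.{u} R) (t : ℕ)
    (h1 : ∀ s : ℕ, S.mem (extIdeal 𝔞 s M))
    (h2 : ∀ (s j : ℕ), j ≠ t → S.mem (extIdeal 𝔞 s ((localCohomology 𝔟 j).obj M))) :
    ∀ s : ℕ, S.mem (extIdeal 𝔞 s ((localCohomology 𝔟 t).obj M)) := by
  have h := SerreClass.extMem_localCohomologyColimit_of_ne (S := S) h𝔟𝔞 t M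
    (fun s ↦ (SerreClass.mem_extIdeal_iff 𝔞 s M).mp (h1 s)) fun j hj ↦
      SerreClass.ExtMem.congr (CategoryTheory.localCohomologyObjIso 𝔟 M j)
        fun s ↦ (SerreClass.mem_extIdeal_iff 𝔞 s _).mp (h2 s j hj)
  exact fun s ↦ (SerreClass.mem_extIdeal_iff 𝔞 s _).mpr
    (h.congr (CategoryTheory.localCohomologyObjIso 𝔟 M t).symm s)
end
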